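/- arXiv:2404.16741 — 2 statements merged into one kernel-verified Lean document; each statement's English description precedes it below -/
import Mathlib

section
/- Let (D,K,T) be an MD-SPP instance with T ≥ 2, let k := |K|, and let q := ⌈(2^k + k)(1 + k/(T−1))⌉. Suppose that |V(D)| > q and that F is a set of vertices each of which is q-enclosed with respect to (D,K,T). Then (D,K,T) is a YES-instance of MD-SPP if and only if (D,F,K,T) is a YES-instance of SMD-SPP. -/
open Relation

variable {V : Type*} [DecidableEq V]

/-- The adjacency relation of a digraph given by its edge set. -/
def Adj (E : Finset (V × V)) : V → V → Prop := fun a b => (a, b) ∈ E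

/-- `D` is a digraph: no self-loops (no parallel edges since edges form a set). -/
def IsDigraph (D : Finset (V × V)) : Prop := ∀ e ∈ D, e.1 ≠ e.2

/-- `l` is a directed `s`-`t`-path w.r.t. the adjacency relation `A`:
a nonempty duplicate-free list of vertices, consecutive ones adjacent,
starting at `s` and ending at `t`. -/
def DiPath (A : V → V → Prop) (s t : V) (l : List V) : Prop :=
  l.Chain' A ∧ l.Nodup ∧ l.head? = some s ∧ l.getLast? = some t

/-- Adjacency in the transitive closure `T(D)` of the digraph with edge set `E`:
`(u,v)` is an edge iff `u ≠ v` and `v` is reachable from `u` in `E`. -/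
def TCAdj (E : Finset (V × V)) (u v : V) : Prop :=
  u ≠ v ∧ Relation.ReflTransGen (Adj E) u v

/-- The outdegree of `v` in the digraph with edge set `H`. -/
def outDeg (H : Finset (V × V)) (v : V) : ℕ :=
  (H.filter fun e => e.1 = v).card

/-- The list of (directed) edges traversed by a list of vertices. -/
def listEdges (l : List V) : List (V × V) := l.zip l.tail

/-- The routed commodities in `K` are valid: for `(s,t,P) ∈ K`,
`P` is a directed `s`-`t`-path in `D`. -/
def ValidSPP (D : Finset (V × V)) (K : Finset (V × V × List V)) : Prop :=
  ∀ k ∈ K, DiPath (Adj D) k.1 k.2.1 k.2.2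

/-- `H` is a solution graph of the MD-SPP instance `(D,K,T)`: a subgraph of
`T(D)` of maximum outdegree at most `T` such that every routed commodity
`(s,t,P) ∈ K` has a directed `s`-`t`-path in `H ∩ T(P)`, i.e. an `s`-`t`-path
whose edges are in `H` and whose vertices lie on `P` in the same order
(a sublist of `P`). -/
def SPPSolution (D : Finset (V × V)) (K : Finset (V × V × List V)) (T : ℕ)
    (H : Finset (V × V)) : Prop :=
  (∀ e ∈ H, TCAdj D e.1 e.2) ∧ (∀ v, outDeg H v ≤ T) ∧
  (∀ k ∈ K, ∃ l, DiPath (Adj H) k.1 k.2.1 l ∧ l.Sublist k.2.2)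

/-- `H` is a solution graph of the SMD-SPP instance `(D,F,K,T)`: a subgraph of
`T(D)` such that every vertex outside the flexible set `F` has outdegree at
most `T`, and every routed commodity `(s,t,P) ∈ K` has a directed `s`-`t`-path
in `H ∩ T(P)`. -/
def SMDSolution (D : Finset (V × V)) (F : Finset V) (K : Finset (V × V × List V))
    (T : ℕ) (H : Finset (V × V)) : Prop :=
  (∀ e ∈ H, TCAdj D e.1 e.2) ∧ (∀ v, v ∉ F → outDeg H v ≤ T) ∧
  (∀ k ∈ K, ∃ l, DiPath (Adj H) k.1 k.2.1 l ∧ l.Sublist k.2.2)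

/-- The type of a vertex `v` w.r.t. the routed commodities `K`: the set of
routed commodities whose path contains `v`. -/
def vertexType (K : Finset (V × V × List V)) (v : V) : Finset (V × V × List V) :=
  K.filter fun k => v ∈ k.2.2

/-- `v` is `q`-enclosed w.r.t. the MD-SPP instance with commodities `K`:
there are a nonempty `U ⊆ K` and distinct vertices `v₁, …, v_{2q+1}`, each of
type exactly `U`, with `v_{q+1} = v`, such that every commodity in `U` visits
them in the order `(v₁, …, v_{2q+1})` or in the order `(v_{2q+1}, …, v₁)`. -/
def QEnclosed (K : Finset (V × V × List V)) (q : ℕ) (v : V) : Prop :=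
  ∃ U : Finset (V × V × List V), U ⊆ K ∧ U.Nonempty ∧
    ∃ vs : Fin (2 * q + 1) → V, Function.Injective vs ∧
      (∀ i, vertexType K (vs i) = U) ∧
      vs ⟨q, by omega⟩ = v ∧
      (∀ k ∈ U, (List.ofFn vs).Sublist k.2.2 ∨ (List.ofFn vs).reverse.Sublist k.2.2)

/-!
A solution in which a single enclosed vertex `v` may have large outdegree can be repaired, so the
flexible vertices are eliminated one by one. Put `k = |K|`. If `k ≤ T`, the union of all paths `P`
already has outdegree at most `T`. Otherwise `q ≥ (k + 1)(2k + 1)`, so there are `k + 2` nested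
windows around `v`, of radius `0, 2k + 1, 2(2k + 1), …`. A solution path starts to meet the windows
at one radius at most, hence some window has the property that every path meeting the next larger
one, `N`, meets it too. As `P` runs through the enclosing vertices in one of the two orders,
behind its first vertex in `N` it then traverses one of the two runs of `2k + 1` vertices in which
`N` exceeds the smaller window.

Remove all out-edges of `N`. At most `k` vertices are first entry points, so each run keeps more
than `k` others; these carry a comb with a tooth at every target. A path entering `N` now jumps from
its entry point to the first spine vertex of a comb and descends to its own target. Spine vertices
and entry points have outdegree at most two.
-/

section Lists

variable {α : Type*}

theorem cons_sublist_of_cons_sublist_append {e : α} {Y P Q : List α}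
    (h : (e :: Y).Sublist (P ++ Q)) (he : e ∉ P) : (e :: Y).Sublist Q := by
  obtain ⟨l₁, l₂, heq, h₁, h₂⟩ := List.sublist_append_iff.1 h
  cases l₁ with
  | nil => rwa [heq]
  | cons a l₁ =>
    obtain ⟨rfl, -⟩ := List.cons_eq_cons.1 heq
    exact absurd (h₁.subset List.mem_cons_self) he

theorem sublist_splice {A C Y P : List α} {e : α} (hP : P.Nodup)
    (hC : (A ++ e :: C).Sublist P) (hY : (e :: Y).Sublist P) : (A ++ e :: Y).Sublist P := by
  obtain ⟨P₁, P₂, rfl, hA, hC⟩ := List.append_sublist_iff.1 hC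
  have he : e ∉ P₁ := fun h =>
    List.disjoint_of_nodup_append hP h (hC.subset List.mem_cons_self)
  exact hA.append (cons_sublist_of_cons_sublist_append hY he)

theorem cons_sublist_of_mem_cons_sublist {C W P : List α} {e x : α} (hP : P.Nodup)
    (hC : (e :: C).Sublist P) (hx : x ∈ e :: C) (hW : (x :: W).Sublist P) :
    (e :: W).Sublist P := by
  rcases List.mem_cons.1 hx with rfl | hx
  · exact hW
  · have hex : ([e] ++ x :: []).Sublist P :=
      ((List.singleton_sublist.2 hx).cons_cons e).trans hC
    exact ((List.sublist_cons_self x W).cons_cons e).trans (sublist_splice hP hex hW)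

theorem dropLast_concat_sublist {G P : List α} {t : α} (h : G.Sublist P)
    (ht : P.getLast? = some t) : (G.dropLast ++ [t]).Sublist P := by
  have hdrop : G.dropLast.Sublist P.dropLast := by
    simpa only [List.tail_reverse, List.reverse_reverse] using h.reverse.tail.reverse
  simpa only [List.dropLast_append_getLast? t ht] using hdrop.append (List.Sublist.refl [t])

theorem lt_length_filter_notMem [DecidableEq α] {W : List α} (hW : W.Nodup) {E : Finset α}
    {k : ℕ} (h : E.card + k < W.length) : k < (W.filter (· ∉ E)).length := by
  have hfilter : (W.filter (· ∉ E)).toFinset = W.toFinset \ E := by ext; simp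
  have hcard := Finset.le_card_sdiff E W.toFinset
  rw [← hfilter, List.toFinset_card_of_nodup hW,
    List.toFinset_card_of_nodup (hW.filter _)] at hcard
  omega

theorem getElem_mem_zip {β : Type*} {l : List α} {l' : List β} {i : ℕ} (hi : i < l.length)
    (hi' : i < l'.length) : (l[i], l'[i]) ∈ l.zip l' :=
  List.mem_iff_getElem.2 ⟨i, by simp [hi, hi'], by simp⟩

/-- The vertices at distance at most `n` from `v` on the list `X.reverse ++ v :: Y`. Storing the
part before `v` in reverse makes reversing the list the same as swapping `X` and `Y`. -/
def window (X : List α) (v : α) (Y : List α) (n : ℕ) : List α :=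
  (X.take n).reverse ++ v :: Y.take n

variable {X Y : List α} {v x : α} {m n : ℕ}

theorem mem_window_comm : x ∈ window X v Y n ↔ x ∈ window Y v X n := by
  simp only [window, List.mem_append, List.mem_reverse, List.mem_cons]
  tauto

theorem window_add : window X v Y (n + m) =
    ((X.drop n).take m).reverse ++ (window X v Y n ++ (Y.drop n).take m) := by
  simp [window, List.take_add]

theorem window_sublist : (window X v Y n).Sublist (X.reverse ++ v :: Y) :=
  (List.take_sublist n X).reverse.append ((List.take_sublist n Y).cons_cons v)

theorem window_sublist_window (h : n ≤ m) : (window X v Y n).Sublist (window X v Y m) :=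
  (List.take_prefix_take_left h).sublist.reverse.append
    ((List.take_prefix_take_left h).sublist.cons_cons v)

theorem cons_sublist_window_add (hx : x ∈ window X v Y n) :
    (x :: (Y.drop n).take m).Sublist (window X v Y (n + m)) := by
  rw [window_add]
  exact ((List.singleton_sublist.2 hx).append (List.Sublist.refl _)).trans
    (List.sublist_append_right _ _)

theorem cons_take_drop_sublist_of_first_mem_window {A C P : List α} {e : α} (hP : P.Nodup)
    (hXY : (X.reverse ++ v :: Y).Sublist P) (hC : (A ++ e :: C).Sublist P)
    (hA : ∀ a ∈ A, a ∉ window X v Y (n + m)) (hx : x ∈ A ++ e :: C)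
    (hxn : x ∈ window X v Y n) : (e :: (Y.drop n).take m).Sublist P := by
  have hxA : x ∉ A := fun h =>
    hA x h ((window_sublist_window (Nat.le_add_right n m)).subset hxn)
  exact cons_sublist_of_mem_cons_sublist hP ((List.sublist_append_right A _).trans hC)
    ((List.mem_append.1 hx).resolve_left hxA)
    ((cons_sublist_window_add hxn).trans (window_sublist.trans hXY))

theorem nodup_take_drop_append (h : (X.reverse ++ v :: Y).Nodup) (n m : ℕ) :
    ((Y.drop n).take m ++ (X.drop n).take m).Nodup := by
  have hwindow := h.sublist (window_sublist (n := n + m))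
  rw [window_add] at hwindow
  have hruns := hwindow.sublist
    ((List.Sublist.refl _).append (List.sublist_append_right _ _))
  rw [List.nodup_append_comm] at hruns
  exact (List.Perm.append_left _ (List.reverse_perm _)).nodup_iff.1 hruns

end Lists

theorem exists_forall_succ_imp_of_card_lt {ι : Type*} {A : ℕ → ι → Prop} (hA : Monotone A)
    {s : Finset ι} {n : ℕ} (hn : s.card < n) : ∃ j < n, ∀ p ∈ s, A (j + 1) p → A j p := by
  by_contra! h
  choose f hfs hsucc hnot using fun j : Fin n => h j j.2
  obtain ⟨i, -, j, -, hij, hf⟩ := Finset.exists_ne_map_eq_of_card_lt_of_maps_to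
    (s := Finset.univ) (by simpa using hn) fun i _ => hfs i
  wlog hlt : i < j generalizing i j
  · exact this j i hij.symm hf.symm (lt_of_le_of_ne (not_lt.1 hlt) hij.symm)
  · exact hnot j (hf ▸ hA (Nat.succ_le_of_lt hlt) (f i) (hsucc i))

section OutDegree

theorem outDeg_mono {A B : Finset (V × V)} (h : A ⊆ B) (v : V) : outDeg A v ≤ outDeg B v :=
  Finset.card_le_card (Finset.filter_subset_filter _ h)

theorem outDeg_union_le (A B : Finset (V × V)) (v : V) :
    outDeg (A ∪ B) v ≤ outDeg A v + outDeg B v := by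
  unfold outDeg
  rw [Finset.filter_union]
  exact Finset.card_union_le _ _

theorem outDeg_eq_zero {A : Finset (V × V)} {v : V} (h : ∀ e ∈ A, e.1 ≠ v) :
    outDeg A v = 0 :=
  Finset.card_eq_zero.2 (Finset.filter_eq_empty_iff.2 h)

theorem outDeg_product_le (E B : Finset V) (v : V) : outDeg (E ×ˢ B) v ≤ B.card := by
  have hsub : ((E ×ˢ B).filter fun e => e.1 = v) ⊆ {v} ×ˢ B := by
    rintro ⟨a, b⟩ h
    simp only [Finset.mem_filter, Finset.mem_product] at h
    simp [h.1.2, h.2]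
  exact (Finset.card_le_card hsub).trans (by simp)

theorem outDeg_zip_le_one {G : List V} (hG : G.Nodup) (l : List V) (v : V) :
    outDeg (G.zip l).toFinset v ≤ 1 := by
  have hfst : ((G.zip l).map Prod.fst).Nodup := by
    rw [List.zip_eq_zip_take_min, List.map_fst_zip (by simp)]
    exact hG.sublist (List.take_sublist _ G)
  refine Finset.card_le_one.2 fun e he e' he' => ?_
  simp only [Finset.mem_filter, List.mem_toFinset] at he he'
  exact List.inj_on_of_nodup_map hfst he.1 he'.1 (he.2.trans he'.2.symm)

end OutDegree

section Paths

theorem isChain_listEdges {α : Type*} (l : List α) :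
    l.IsChain fun a b => (a, b) ∈ listEdges l := by
  refine List.isChain_iff_getElem.2 fun i hi => ?_
  have hi' : i < l.tail.length := by
    rw [List.length_tail]
    omega
  have hmem : (l[i], l.tail[i]) ∈ l.zip l.tail := getElem_mem_zip (by omega) hi'
  rwa [List.getElem_tail] at hmem

theorem DiPath.isChain_tcAdj {α : Type*} {D : Finset (α × α)} {s t : α} {P l : List α}
    (hP : DiPath (Adj D) s t P) (hl : l.Sublist P) : l.IsChain (TCAdj D) := by
  have hreach : P.Pairwise (ReflTransGen (Adj D)) :=
    (List.IsChain.imp (fun _ _ => ReflTransGen.single) hP.1).pairwise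
  exact ((hP.2.1.and hreach).sublist hl).isChain

theorem DiPath.replace_tail {α : Type*} {R S : α → α → Prop} {s t t' e : α}
    {A B C : List α} (hl : DiPath R s t (A ++ e :: C)) (hRS : ∀ a ∈ A, ∀ b, R a b → S a b)
    (hB : (e :: B).IsChain S) (hnodup : (A ++ e :: B).Nodup)
    (hlast : (e :: B).getLast? = some t') : DiPath S s t' (A ++ e :: B) := by
  obtain ⟨hA, -, hlink⟩ := List.isChain_append.1 hl.1
  refine ⟨List.isChain_append.2 ⟨?_, hB, fun a ha b hb => ?_⟩, hnodup, ?_, ?_⟩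
  · exact hA.imp_of_mem_imp fun a b ha _ => hRS a ha b
  · exact hRS a (List.mem_of_getLast? ha) b (hlink a ha b hb)
  · simpa only [List.head?_append, List.head?_cons] using hl.2.2.1
  · rw [List.getLast?_append, hlast, Option.some_or]

end Paths

section FirstEntry

variable {ι : Type*}

/-- The vertices at which the paths `l p`, `p ∈ s`, first enter `N`. -/
def entries (s : Finset ι) (l : ι → List V) (N : Finset V) : Finset V :=
  s.biUnion fun p => ((l p).find? (· ∈ N)).toFinset

variable {s : Finset ι} {l : ι → List V} {N : Finset V}

theorem card_entries_le : (entries s l N).card ≤ s.card := by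
  refine (Finset.card_biUnion_le_card_mul s _ 1 fun p _ => ?_).trans_eq (mul_one _)
  cases (l p).find? (· ∈ N) <;> simp

theorem entries_subset : entries s l N ⊆ N := by
  intro e he
  simp only [entries, Finset.mem_biUnion, Option.mem_toFinset, Option.mem_def] at he
  obtain ⟨p, -, hp⟩ := he
  simpa only [decide_eq_true_eq] using List.find?_some hp

theorem exists_eq_append_cons_entry {p : ι} (hp : p ∈ s) {x : V} (hx : x ∈ l p)
    (hxN : x ∈ N) :
    ∃ A e C, l p = A ++ e :: C ∧ e ∈ entries s l N ∧ ∀ a ∈ A, a ∉ N := by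
  obtain ⟨e, he⟩ : ∃ e, (l p).find? (· ∈ N) = some e :=
    Option.isSome_iff_exists.1 (List.find?_isSome.2 ⟨x, hx, by simpa using hxN⟩)
  obtain ⟨-, A, C, hAC, hA⟩ := List.find?_eq_some_iff_append.1 he
  refine ⟨A, e, C, hAC, ?_, fun a ha => by simpa using hA a ha⟩
  exact Finset.mem_biUnion.2 ⟨p, hp, by simpa using he⟩

end FirstEntry

section Comb

/-- The comb with spine `G` and teeth `ts`: the edges of the path `G` together with an edge from
the `i`-th vertex of `G` to the `i`-th vertex of `ts`. It allows travelling from the start of `G`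
to any vertex of `ts` while using outdegree at most two. -/
def comb (G ts : List V) : Finset (V × V) :=
  (listEdges G).toFinset ∪ (G.zip ts).toFinset

variable {G ts : List V}

theorem outDeg_comb_le_two (hG : G.Nodup) (ts : List V) (v : V) : outDeg (comb G ts) v ≤ 2 :=
  (outDeg_union_le _ _ v).trans
    (add_le_add (outDeg_zip_le_one hG _ v) (outDeg_zip_le_one hG _ v))

theorem fst_mem_of_mem_comb {e : V × V} (he : e ∈ comb G ts) : e.1 ∈ G := by
  rcases Finset.mem_union.1 he with he | he <;>
    exact (List.of_mem_zip (List.mem_toFinset.1 he)).1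

theorem exists_isChain_comb {t : V} (ht : t ∈ ts) (hlen : ts.length < G.length) :
    ∃ S, S ≠ [] ∧ S <+: G.dropLast ∧ (S ++ [t]).IsChain (Adj (comb G ts)) := by
  obtain ⟨i, hi, rfl⟩ := List.mem_iff_getElem.1 ht
  refine ⟨G.take (i + 1), ?_, ?_, List.isChain_append.2 ⟨?_, List.isChain_singleton _, ?_⟩⟩
  · exact List.ne_nil_of_length_pos (by rw [List.length_take]; omega)
  · rw [List.dropLast_eq_take]
    exact List.take_prefix_take_left (by omega)
  · refine List.IsChain.take (List.IsChain.imp (fun a b hab => ?_) (isChain_listEdges G)) _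
    exact Finset.mem_union_left _ (List.mem_toFinset.2 hab)
  · have htooth : Adj (comb G ts) G[i] ts[i] :=
      Finset.mem_union_right _ (List.mem_toFinset.2 (getElem_mem_zip (by omega) hi))
    simpa [List.getLast?_take, List.getElem?_eq_getElem (show i < G.length by omega)]
      using htooth

end Comb

section Rewire

/-- The graph `H` with the out-edges of all vertices of `N` replaced: every entry vertex in `E` gets
edges to the first vertices of `G₁` and `G₂`, and the vertices of `G₁` and `G₂` carry combs with
teeth `ts`. -/
def rewire (H : Finset (V × V)) (N E : Finset V) (G₁ G₂ ts : List V) : Finset (V × V) :=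
  (H.filter fun e => e.1 ∉ N) ∪ E ×ˢ (G₁.head?.toFinset ∪ G₂.head?.toFinset) ∪
    (comb G₁ ts ∪ comb G₂ ts)

variable {H : Finset (V × V)} {N E : Finset V} {G₁ G₂ ts : List V}

theorem rewire_comm : rewire H N E G₁ G₂ ts = rewire H N E G₂ G₁ ts := by
  unfold rewire
  rw [Finset.union_comm G₁.head?.toFinset, Finset.union_comm (comb G₁ ts)]

theorem adj_rewire_of_notMem {a b : V} (ha : a ∉ N) (hab : Adj H a b) :
    Adj (rewire H N E G₁ G₂ ts) a b :=
  Finset.mem_union_left _ (Finset.mem_union_left _ (Finset.mem_filter.2 ⟨hab, ha⟩))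

theorem adj_rewire_head {e g : V} (he : e ∈ E) (hg : g ∈ G₁.head?) :
    Adj (rewire H N E G₁ G₂ ts) e g :=
  Finset.mem_union_left _ (Finset.mem_union_right _
    (Finset.mk_mem_product he (Finset.mem_union_left _ (Option.mem_toFinset.2 hg))))

theorem adj_rewire_of_comb {a b : V} (hab : Adj (comb G₁ ts) a b) :
    Adj (rewire H N E G₁ G₂ ts) a b :=
  Finset.mem_union_right _ (Finset.mem_union_left _ hab)

theorem card_head?_union_head?_le_two (G₁ G₂ : List V) :
    (G₁.head?.toFinset ∪ G₂.head?.toFinset).card ≤ 2 := by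
  have hone (o : Option V) : o.toFinset.card ≤ 1 := by cases o <;> simp
  exact (Finset.card_union_le _ _).trans (add_le_add (hone _) (hone _))

theorem outDeg_rewire_le (hnodup : (G₁ ++ G₂).Nodup) (hN : ∀ x ∈ G₁ ++ G₂, x ∈ N)
    (hE : ∀ x ∈ G₁ ++ G₂, x ∉ E) (hEN : E ⊆ N) {T : ℕ} (hT : 2 ≤ T) {v : V}
    (hv : v ∉ N → outDeg H v ≤ T) : outDeg (rewire H N E G₁ G₂ ts) v ≤ T := by
  obtain ⟨hG₁, hG₂, hdisj⟩ := List.nodup_append'.1 hnodup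
  have hkept := outDeg_mono (Finset.filter_subset (fun e => e.1 ∉ N) H) v
  have hkept₀ (h : v ∈ N) : outDeg (H.filter fun e => e.1 ∉ N) v = 0 :=
    outDeg_eq_zero fun e he hev => (Finset.mem_filter.1 he).2 (hev ▸ h)
  set heads := G₁.head?.toFinset ∪ G₂.head?.toFinset
  have hentry := (outDeg_product_le E heads v).trans (card_head?_union_head?_le_two G₁ G₂)
  have hentry₀ (h : v ∉ E) : outDeg (E ×ˢ heads) v = 0 :=
    outDeg_eq_zero fun e he hev => h (hev ▸ (Finset.mem_product.1 he).1)
  have hcomb₀ (G : List V) (h : v ∉ G) : outDeg (comb G ts) v = 0 :=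
    outDeg_eq_zero fun e he hev => h (hev ▸ fst_mem_of_mem_comb he)
  have hcomb : outDeg (comb G₁ ts) v + outDeg (comb G₂ ts) v ≤ 2 := by
    by_cases hvG : v ∈ G₁
    · rw [hcomb₀ G₂ (hdisj hvG), add_zero]
      exact outDeg_comb_le_two hG₁ ts v
    · rw [hcomb₀ G₁ hvG, zero_add]
      exact outDeg_comb_le_two hG₂ ts v
  have hsum : outDeg (rewire H N E G₁ G₂ ts) v ≤
      outDeg (H.filter fun e => e.1 ∉ N) v + outDeg (E ×ˢ heads) v +
        (outDeg (comb G₁ ts) v + outDeg (comb G₂ ts) v) :=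
    (outDeg_union_le _ _ v).trans (add_le_add (outDeg_union_le _ _ v) (outDeg_union_le _ _ v))
  by_cases hvG : v ∈ G₁ ++ G₂
  · rw [hkept₀ (hN v hvG), hentry₀ (hE v hvG)] at hsum
    omega
  rw [List.mem_append, not_or] at hvG
  rw [hcomb₀ G₁ hvG.1, hcomb₀ G₂ hvG.2] at hsum
  by_cases hvE : v ∈ E
  · rw [hkept₀ (hEN hvE)] at hsum
    omega
  rw [hentry₀ hvE] at hsum
  by_cases hvN : v ∈ N
  · rw [hkept₀ hvN] at hsum
    omega
  · exact hsum.trans (hkept.trans (hv hvN))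

theorem exists_diPath_rewire {s t e : V} {P A C : List V} (hP : P.Nodup)
    (ht : P.getLast? = some t) (hl : DiPath (Adj H) s t (A ++ e :: C))
    (hlP : (A ++ e :: C).Sublist P) (hA : ∀ a ∈ A, a ∉ N) (he : e ∈ E)
    (hG : (e :: G₁).Sublist P) (hts : t ∈ ts) (hlen : ts.length < G₁.length) :
    ∃ l, DiPath (Adj (rewire H N E G₁ G₂ ts)) s t l ∧ l.Sublist P := by
  obtain ⟨S, hS, hSG, hchain⟩ := exists_isChain_comb hts hlen
  have hG₁ : G₁ ≠ [] := List.ne_nil_of_length_pos (by omega)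
  have hdetour : (e :: (S ++ [t])).Sublist P := by
    have := dropLast_concat_sublist hG ht
    rw [List.dropLast_cons_of_ne_nil hG₁] at this
    exact ((hSG.sublist.append (List.Sublist.refl [t])).cons_cons e).trans this
  have hsub := sublist_splice hP hlP hdetour
  refine ⟨_, hl.replace_tail (fun a ha b => adj_rewire_of_notMem (hA a ha)) ?_
    (hP.sublist hsub) ?_, hsub⟩
  · refine List.isChain_cons.2 ⟨fun g hg => adj_rewire_head he ?_,
      List.IsChain.imp (fun _ _ => adj_rewire_of_comb) hchain⟩
    obtain ⟨S', hS'⟩ := hSG.trans (List.dropLast_prefix G₁)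
    rw [List.head?_append_of_ne_nil _ hS] at hg
    rwa [← hS', List.head?_append_of_ne_nil _ hS]
  · rw [← List.cons_append, List.getLast?_concat]

end Rewire

section Solutions

variable {D H : Finset (V × V)} {F : Finset V} {K : Finset (V × V × List V)} {T : ℕ}

theorem smdSolution_empty_iff : SMDSolution D ∅ K T H ↔ SPPSolution D K T H := by
  simp only [SMDSolution, SPPSolution, Finset.notMem_empty, not_false_eq_true, forall_const]

theorem SPPSolution.smdSolution (h : SPPSolution D K T H) (F : Finset V) :
    SMDSolution D F K T H :=
  ⟨h.1, fun v _ => h.2.1 v, h.2.2⟩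

theorem exists_smdSolution_of_paths (hK : ValidSPP D K) (hdeg : ∀ v ∉ F, outDeg H v ≤ T)
    (hpath : ∀ p ∈ K, ∃ l, DiPath (Adj H) p.1 p.2.1 l ∧ l.Sublist p.2.2) :
    ∃ H', SMDSolution D F K T H' := by
  classical
  refine ⟨H.filter fun e => TCAdj D e.1 e.2, fun e he => (Finset.mem_filter.1 he).2,
    fun v hv => (outDeg_mono (Finset.filter_subset _ _) v).trans (hdeg v hv), fun p hp => ?_⟩
  obtain ⟨l, hl, hlP⟩ := hpath p hp
  refine ⟨l, ⟨List.isChain_iff_getElem.2 fun i hi => Finset.mem_filter.2 ⟨?_, ?_⟩, hl.2⟩, hlP⟩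
  · exact List.isChain_iff_getElem.1 hl.1 i hi
  · exact List.isChain_iff_getElem.1 ((hK p hp).isChain_tcAdj hlP) i hi

theorem exists_smdSolution_of_card_le (hK : ValidSPP D K) (hT : K.card ≤ T) (F : Finset V) :
    ∃ H, SMDSolution D F K T H := by
  refine exists_smdSolution_of_paths (H := K.biUnion fun p => (listEdges p.2.2).toFinset) hK
    (fun v _ => le_trans ?_ hT) fun p hp => ⟨p.2.2, ⟨?_, (hK p hp).2⟩, List.Sublist.refl _⟩
  · rw [outDeg, Finset.filter_biUnion]
    exact (Finset.card_biUnion_le_card_mul _ _ 1 fun p hp =>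
      outDeg_zip_le_one (hK p hp).2.1 _ v).trans_eq (mul_one _)
  · exact List.IsChain.imp
      (fun a b hab => Finset.mem_biUnion.2 ⟨p, hp, List.mem_toFinset.2 hab⟩)
      (isChain_listEdges p.2.2)

end Solutions

section EscapeWindow

variable {D H : Finset (V × V)} {F N : Finset V} {K : Finset (V × V × List V)} {T q m : ℕ}
  {v : V} {l : V × V × List V → List V} {W₁ W₂ : List V}

/-- A set `N` containing two disjoint runs `W₁` and `W₂` of `m` vertices each such that every
commodity whose solution path `l p` enters `N` visits one of the two runs completely, and in order,
after the vertex of first entry. -/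
structure IsEscapeWindow (K : Finset (V × V × List V)) (l : V × V × List V → List V)
    (N : Finset V) (W₁ W₂ : List V) (m : ℕ) : Prop where
  length_left : W₁.length = m
  length_right : W₂.length = m
  nodup : (W₁ ++ W₂).Nodup
  mem : ∀ x ∈ W₁ ++ W₂, x ∈ N
  escape : ∀ p ∈ K, ∀ A e C, l p = A ++ e :: C → (∀ a ∈ A, a ∉ N) → e ∈ N →
    (e :: W₁).Sublist p.2.2 ∨ (e :: W₂).Sublist p.2.2

theorem QEnclosed.exists_centered_list (hv : QEnclosed K q v) :
    ∃ X Y : List V, X.length = q ∧ Y.length = q ∧ (X.reverse ++ v :: Y).Nodup ∧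
      ∀ p ∈ K, ∀ x ∈ X.reverse ++ v :: Y, x ∈ p.2.2 →
        (X.reverse ++ v :: Y).Sublist p.2.2 ∨ (Y.reverse ++ v :: X).Sublist p.2.2 := by
  obtain ⟨U, -, -, vs, hinj, htype, hmid, horder⟩ := hv
  have hsplit : List.ofFn vs =
      ((List.ofFn vs).take q).reverse.reverse ++ v :: (List.ofFn vs).drop (q + 1) := by
    have hq : q < (List.ofFn vs).length := by rw [List.length_ofFn]; omega
    have hget : (List.ofFn vs)[q] = v := by rw [List.getElem_ofFn]; exact hmid
    rw [List.reverse_reverse, ← hget, ← List.drop_eq_getElem_cons hq, List.take_append_drop]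
  refine ⟨((List.ofFn vs).take q).reverse, (List.ofFn vs).drop (q + 1), ?_, ?_,
    hsplit ▸ List.nodup_ofFn.2 hinj, fun p hp x hx hxp => ?_⟩
  · simp only [List.length_reverse, List.length_take, List.length_ofFn]
    omega
  · simp only [List.length_drop, List.length_ofFn]
    omega
  rw [← hsplit] at hx ⊢
  obtain ⟨i, rfl⟩ := List.mem_ofFn.1 hx
  have hpU : p ∈ U := htype i ▸ Finset.mem_filter.2 ⟨hp, hxp⟩
  refine (horder p hpU).imp_right fun hrev => ?_
  rw [hsplit] at hrev
  simpa using hrev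

theorem QEnclosed.exists_isEscapeWindow (hv : QEnclosed K q v) (hK : ValidSPP D K)
    (hq : (K.card + 1) * m ≤ q) (hlP : ∀ p ∈ K, (l p).Sublist p.2.2) :
    ∃ N W₁ W₂, v ∈ N ∧ IsEscapeWindow K l N W₁ W₂ m := by
  obtain ⟨X, Y, hX, hY, hnodup, horder⟩ := hv.exists_centered_list
  obtain ⟨j, hj, hmeet⟩ := exists_forall_succ_imp_of_card_lt (s := K)
    (A := fun j p => ∃ x ∈ l p, x ∈ window X v Y (j * m))
    (fun i j hij p ⟨x, hx, hxi⟩ =>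
      ⟨x, hx, (window_sublist_window (Nat.mul_le_mul_right m hij)).subset hxi⟩)
    (Nat.lt_succ_self _)
  have hlen : j * m + m ≤ q := by
    rw [← Nat.succ_mul]
    exact (Nat.mul_le_mul_right m hj).trans hq
  refine ⟨(window X v Y (j * m + m)).toFinset, (Y.drop (j * m)).take m,
    (X.drop (j * m)).take m, by simp [window],
    by rw [List.length_take, List.length_drop]; omega,
    by rw [List.length_take, List.length_drop]; omega,
    nodup_take_drop_append hnodup _ _, fun x hx => ?_, fun p hp A e C hAC hA he => ?_⟩
  · rw [window_add]
    simp only [List.mem_append, List.mem_toFinset, List.mem_reverse] at hx ⊢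
    tauto
  · simp only [List.mem_toFinset] at hA he
    have heC : (A ++ e :: C).Sublist p.2.2 := hAC ▸ hlP p hp
    have heP : e ∈ p.2.2 := heC.subset (List.mem_append_right A List.mem_cons_self)
    obtain ⟨x, hxl, hx⟩ : ∃ x ∈ A ++ e :: C, x ∈ window X v Y (j * m) :=
      hAC ▸ hmeet p hp ⟨e, by simp [hAC], by rwa [Nat.succ_mul]⟩
    refine (horder p hp e (window_sublist.subset he) heP).imp (fun hfwd => ?_) fun hbwd => ?_
    · exact cons_take_drop_sublist_of_first_mem_window (hK p hp).2.1 hfwd heC hA hxl hx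
    · exact cons_take_drop_sublist_of_first_mem_window (hK p hp).2.1 hbwd heC
        (fun a ha h => hA a ha (mem_window_comm.1 h)) hxl (mem_window_comm.1 hx)

theorem IsEscapeWindow.exists_smdSolution (hW : IsEscapeWindow K l N W₁ W₂ (2 * K.card + 1))
    (hK : ValidSPP D K) (hT : 2 ≤ T)
    (hl : ∀ p ∈ K, DiPath (Adj H) p.1 p.2.1 (l p) ∧ (l p).Sublist p.2.2)
    (hdeg : ∀ v ∉ F, v ∉ N → outDeg H v ≤ T) : ∃ H', SMDSolution D F K T H' := by
  set E := entries K l N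
  set ts := K.toList.map fun p => p.2.1
  have hE : E.card ≤ K.card := card_entries_le
  obtain ⟨hW₁, hW₂, -⟩ := List.nodup_append'.1 hW.nodup
  have hlen₁ : ts.length < (W₁.filter (· ∉ E)).length := by
    simpa [ts] using lt_length_filter_notMem hW₁ (E := E) (k := K.card)
      (by rw [hW.length_left]; omega)
  have hlen₂ : ts.length < (W₂.filter (· ∉ E)).length := by
    simpa [ts] using lt_length_filter_notMem hW₂ (E := E) (k := K.card)
      (by rw [hW.length_right]; omega)
  refine exists_smdSolution_of_paths
    (H := rewire H N E (W₁.filter (· ∉ E)) (W₂.filter (· ∉ E)) ts) hK (fun v hv => ?_) ?_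
  · refine outDeg_rewire_le ?_ ?_ ?_ entries_subset hT (hdeg v hv) <;> rw [← List.filter_append]
    · exact hW.nodup.filter _
    · exact fun x hx => hW.mem x (List.mem_filter.1 hx).1
    · exact fun x hx => of_decide_eq_true (List.mem_filter.1 hx).2
  intro p hp
  obtain ⟨hlp, hlP⟩ := hl p hp
  have htp : p.2.1 ∈ ts := List.mem_map.2 ⟨p, Finset.mem_toList.2 hp, rfl⟩
  by_cases hmeet : ∃ x ∈ l p, x ∈ N
  · obtain ⟨x, hx, hxN⟩ := hmeet
    obtain ⟨A, e, C, hAC, heE, hA⟩ := exists_eq_append_cons_entry hp hx hxN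
    have hescape := hW.escape p hp A e C hAC hA (entries_subset heE)
    rw [hAC] at hlp hlP
    obtain ⟨-, hPnodup, -, hlast⟩ := hK p hp
    rcases hescape with h | h
    · exact exists_diPath_rewire hPnodup hlast hlp hlP hA heE
        ((List.filter_sublist.cons_cons e).trans h) htp hlen₁
    · rw [rewire_comm]
      exact exists_diPath_rewire hPnodup hlast hlp hlP hA heE
        ((List.filter_sublist.cons_cons e).trans h) htp hlen₂
  · push Not at hmeet
    exact ⟨l p, ⟨List.IsChain.imp_of_mem_imp
      (fun a b ha _ => adj_rewire_of_notMem (hmeet a ha)) hlp.1, hlp.2⟩, hlP⟩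

theorem SMDSolution.exists_of_insert (hH : SMDSolution D (insert v F) K T H)
    (hK : ValidSPP D K) (hT : 2 ≤ T) (hv : QEnclosed K q v)
    (hq : (K.card + 1) * (2 * K.card + 1) ≤ q) : ∃ H', SMDSolution D F K T H' := by
  obtain ⟨-, hdeg, hpath⟩ := hH
  choose! l hl using hpath
  obtain ⟨N, W₁, W₂, hvN, hW⟩ := hv.exists_isEscapeWindow hK hq fun p hp => (hl p hp).2
  refine hW.exists_smdSolution hK hT hl fun x hxF hxN => hdeg x ?_
  rw [Finset.mem_insert]
  rintro (rfl | hx)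
  exacts [hxN hvN, hxF hx]

theorem exists_sppSolution_of_smdSolution (hK : ValidSPP D K) (hT : 2 ≤ T)
    (hq : (K.card + 1) * (2 * K.card + 1) ≤ q) (hF : ∀ v ∈ F, QEnclosed K q v)
    (hH : SMDSolution D F K T H) : ∃ H', SPPSolution D K T H' := by
  induction F using Finset.induction_on generalizing H with
  | empty => exact ⟨H, smdSolution_empty_iff.1 hH⟩
  | insert v F _ ih =>
    obtain ⟨H', hH'⟩ := hH.exists_of_insert hK hT (hF v (Finset.mem_insert_self v F)) hq
    exact ih (fun x hx => hF x (Finset.mem_insert_of_mem hx)) hH'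

end EscapeWindow

theorem two_mul_sq_le_two_pow_succ_add {k : ℕ} (hk : 3 ≤ k) : 2 * k ^ 2 ≤ 2 ^ (k + 1) + k := by
  induction k, hk using Nat.le_induction with
  | base => norm_num
  | succ k hk ih =>
    rw [pow_succ 2 (k + 1)]
    nlinarith

theorem succ_mul_two_mul_add_one_le_ceil {k T : ℕ} (hT : 2 ≤ T) (hk : T < k) :
    (k + 1) * (2 * k + 1) ≤ ⌈((2 ^ k + k : ℕ) : ℝ) * (1 + (k : ℝ) / ((T : ℝ) - 1))⌉₊ := by
  have hT' : (0 : ℝ) < (T : ℝ) - 1 := by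
    have : (2 : ℝ) ≤ T := by exact_mod_cast hT
    linarith
  have hk' : (T : ℝ) + 1 ≤ k := by exact_mod_cast hk
  have hfactor : 2 * ((k : ℝ) + 1) ≤ k * (1 + k / ((T : ℝ) - 1)) := by
    have : (k : ℝ) + 2 ≤ k * k / ((T : ℝ) - 1) := by
      rw [le_div_iff₀ hT']
      nlinarith
    calc 2 * ((k : ℝ) + 1) = k + (k + 2) := by ring
      _ ≤ k + k * k / ((T : ℝ) - 1) := by gcongr
      _ = k * (1 + k / ((T : ℝ) - 1)) := by ring
  have hpow : (k : ℝ) * (2 * k + 1) ≤ 2 * ((2 ^ k + k : ℕ) : ℝ) := by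
    have := two_mul_sq_le_two_pow_succ_add (show 3 ≤ k by omega)
    rw [pow_succ 2 k] at this
    exact_mod_cast (by nlinarith : k * (2 * k + 1) ≤ 2 * (2 ^ k + k))
  have hdouble : 2 * (((k : ℝ) + 1) * (2 * k + 1)) ≤
      2 * (((2 ^ k + k : ℕ) : ℝ) * (1 + (k : ℝ) / ((T : ℝ) - 1))) :=
    calc 2 * (((k : ℝ) + 1) * (2 * k + 1)) = 2 * ((k : ℝ) + 1) * (2 * k + 1) := by ring
      _ ≤ k * (1 + k / ((T : ℝ) - 1)) * (2 * k + 1) := by gcongr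
      _ = k * (2 * k + 1) * (1 + k / ((T : ℝ) - 1)) := by ring
      _ ≤ 2 * ((2 ^ k + k : ℕ) : ℝ) * (1 + k / ((T : ℝ) - 1)) := by gcongr
      _ = _ := by ring
  have hreal : (((k + 1) * (2 * k + 1) : ℕ) : ℝ) ≤
      ((2 ^ k + k : ℕ) : ℝ) * (1 + (k : ℝ) / ((T : ℝ) - 1)) := by
    push_cast at hdouble ⊢
    linarith
  exact_mod_cast hreal.trans (Nat.le_ceil _)

theorem mdspp_iff_smdspp_enclosed_general (D : Finset (V × V)) (K : Finset (V × V × List V))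
    (T : ℕ) (F : Finset V) (hKvalid : ValidSPP D K) (hT : 2 ≤ T) (q : ℕ)
    (hq : T < K.card → (K.card + 1) * (2 * K.card + 1) ≤ q) (hF : ∀ v ∈ F, QEnclosed K q v) :
    (∃ H : Finset (V × V), SPPSolution D K T H) ↔
      (∃ H : Finset (V × V), SMDSolution D F K T H) := by
  refine ⟨fun ⟨H, hH⟩ => ⟨H, hH.smdSolution F⟩, fun ⟨H, hH⟩ => ?_⟩
  rcases le_or_gt K.card T with hk | hk
  · obtain ⟨H', hH'⟩ := exists_smdSolution_of_card_le hKvalid hk ∅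
    exact ⟨H', smdSolution_empty_iff.1 hH'⟩
  · exact exists_sppSolution_of_smdSolution hKvalid hT (hq hk) hF hH

/-- Let `(D,K,T)` be an MD-SPP instance with `T ≥ 2`,
`k := |K|`, and `q := ⌈(2^k + k)(1 + k/(T−1))⌉`. If `|V(D)| > q` and every
vertex of `F` is `q`-enclosed w.r.t. `(D,K,T)`, then `(D,K,T)` is a
YES-instance of MD-SPP iff `(D,F,K,T)` is a YES-instance of SMD-SPP. -/
theorem mdspp_iff_smdspp_enclosed {V : Type*} [Fintype V] [DecidableEq V]
    (D : Finset (V × V)) (K : Finset (V × V × List V)) (T : ℕ) (F : Finset V)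
    (hD : IsDigraph D) (hKvalid : ValidSPP D K) (hT : 2 ≤ T)
    (q : ℕ)
    (hq : q = ⌈((2 ^ K.card + K.card : ℕ) : ℝ) * (1 + (K.card : ℝ) / ((T : ℝ) - 1))⌉₊)
    (hV : q < Fintype.card V)
    (hF : ∀ v ∈ F, QEnclosed K q v) :
    (∃ H : Finset (V × V), SPPSolution D K T H) ↔
      (∃ H : Finset (V × V), SMDSolution D F K T H) :=
  mdspp_iff_smdspp_enclosed_general D K T F hKvalid hT q
    (fun hk => hq ▸ succ_mul_two_mul_add_one_le_ceil hT hk) hF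
end

section
/- Let m, B ∈ ℕ and let n_1, …, n_{3m} be pairwise distinct positive integers with Σ_{i=1}^{3m} n_i = mB and B/4 < n_i < B/2 for all i ∈ [3m], and let (D,K) be the digraph and commodity set constructed from these data as described. Then the integers n_1, …, n_{3m} can be partitioned into m triples each summing to B if and only if (D,K,2) is a YES-instance of MD-RSPP. -/
open Relation

variable {V : Type*} [DecidableEq V]

/-- `H` is a solution graph of the MD-RSPP instance `(D,K,T)`: a subgraph of
`T(D)` of maximum outdegree at most `T` containing a directed `s`-`t`-path for
every commodity `(s,t) ∈ K`. -/
def RSPPSolution (D K : Finset (V × V)) (T : ℕ) (H : Finset (V × V)) : Prop :=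
  (∀ e ∈ H, TCAdj D e.1 e.2) ∧ (∀ v, outDeg H v ≤ T) ∧
  (∀ k ∈ K, ∃ l, DiPath (Adj H) k.1 k.2 l)

/-- The vertices of the digraph constructed from a 3-Partition instance with
`m` triples, bound `B` and integers `n : Fin (3*m) → ℕ`: the vertices
`s_i, s'_i` (`i ∈ [m]`), `w_i^j` (`i ∈ [3m]`, `j ∈ [n_i]`, 0-indexed),
`w̃_i` (`i ∈ [3m]`), and `r_i^j, r̃_i^j, r̄_i^j` (`i ∈ [m]`, `j ∈ [B]`,
0-indexed). (Vertices `w i j` with `j ≥ n i` and `r/rt/rb i j` with `j ≥ B`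
are unused: they are isolated and occur in no commodity.) -/
inductive Vtx (m : ℕ) : Type
  | s (i : Fin m)
  | s' (i : Fin m)
  | w (i : Fin (3 * m)) (j : ℕ)
  | wt (i : Fin (3 * m))
  | r (i : Fin m) (j : ℕ)
  | rt (i : Fin m) (j : ℕ)
  | rb (i : Fin m) (j : ℕ)
  deriving DecidableEq

/-- The main directed path of the construction:
`s_1, s'_1, …, s_m, s'_m`, then `w_1^1, …, w_1^{n_1}, …, w_{3m}^1, …,
w_{3m}^{n_{3m}}`, then `r_1^1, …, r_1^B, …, r_m^1, …, r_m^B` (0-indexed). -/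
def mainPath (m B : ℕ) (n : Fin (3 * m) → ℕ) : List (Vtx m) :=
  ((List.finRange m).flatMap fun i => [Vtx.s i, Vtx.s' i]) ++
  ((List.finRange (3 * m)).flatMap fun i =>
    (List.range (n i)).map fun j => Vtx.w i j) ++
  ((List.finRange m).flatMap fun i =>
    (List.range B).map fun j => Vtx.r i j)

/-- The edge set of the constructed digraph `D`: the main path, the edges
`(w_i^{n_i}, w̃_i)`, and the edges `(r_i^j, r̃_i^j)` and `(r_i^j, r̄_i^j)`. -/
def hardD (m B : ℕ) (n : Fin (3 * m) → ℕ) : Finset (Vtx m × Vtx m) :=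
  (listEdges (mainPath m B n)).toFinset ∪
  ((List.finRange (3 * m)).map fun i => (Vtx.w i (n i - 1), Vtx.wt i)).toFinset ∪
  ((List.finRange m).flatMap fun i => (List.range B).flatMap fun j =>
    [(Vtx.r i j, Vtx.rt i j), (Vtx.r i j, Vtx.rb i j)]).toFinset

/-- The commodity (source, destination) pairs of the construction:
`(s_i, s'_i)` and `(s_i, r_i^j)` for `i ∈ [m]`, `j ∈ [B]`;
`(w_i^j, w_i^{j+1})` for `i ∈ [3m]`, `j ∈ [n_i − 1]`; `(w_i^{n_i}, w̃_i)` for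
`i ∈ [3m]`; and `(r_i^j, r̃_i^j)`, `(r_i^j, r̄_i^j)` for `i ∈ [m]`, `j ∈ [B]`. -/
def hardK (m B : ℕ) (n : Fin (3 * m) → ℕ) : Finset (Vtx m × Vtx m) :=
  (((List.finRange m).map fun i => (Vtx.s i, Vtx.s' i)) ++
   ((List.finRange m).flatMap fun i =>
     (List.range B).map fun j => (Vtx.s i, Vtx.r i j)) ++
   ((List.finRange (3 * m)).flatMap fun i =>
     (List.range (n i - 1)).map fun j => (Vtx.w i j, Vtx.w i (j + 1))) ++
   ((List.finRange (3 * m)).map fun i => (Vtx.w i (n i - 1), Vtx.wt i)) ++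
   ((List.finRange m).flatMap fun i => (List.range B).flatMap fun j =>
     [(Vtx.r i j, Vtx.rt i j), (Vtx.r i j, Vtx.rb i j)])).toFinset

/-- The integers `n_1, …, n_{3m}` can be partitioned into `m` triples each
summing to `B`. -/
def ThreePartition (m B : ℕ) (n : Fin (3 * m) → ℕ) : Prop :=
  ∃ f : Fin (3 * m) → Fin m, ∀ t : Fin m,
    (Finset.univ.filter fun i => f i = t).card = 3 ∧
    ∑ i ∈ Finset.univ.filter (fun i => f i = t), n i = B

/-! A 3-partition yields a solution in which `s_t` and `s'_t` lead to the three blocks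
`w_i^1, …, w_i^{n_i}` of the triple `t`, each block is traversed as a path to `w̃_i`, and the `B`
block vertices of the triple have the `B` vertices `r_t^j` as their second out-neighbours.

Conversely, every commodity but the `(s_t, r_t^j)` is an edge of the graded digraph `D` and hence
belongs to every solution. In a digraph of maximum outdegree 2, the number of leaves reachable from
a set of sources is at most the number of these sources plus the number of reachable branching
vertices. For the set of all `s_t` this bound forces all blocks to be reached, and it is then an
equality. So the solution is a forest rooted at the `s_t`, and every block lies in exactly one of
its trees. Let `I_t` be the set of blocks in the tree of `s_t`. The bound for this single tree reads
`|I_t| + B ≤ 3 + ∑_{i ∈ I_t} n_i`; summation over `t` shows that equality holds throughout, that is,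
`∑_{i ∈ I_t} (n_i - 1) = B - 3`. Each summand is at least a quarter and at most half of `B - 3`, and
the summands are distinct, so there are exactly three of them. -/

open scoped Finset

section Reachability

variable {α : Type*} {A : α → α → Prop} {s t v : α}

theorem exists_diPath_iff_reflTransGen : (∃ l, DiPath A s t l) ↔ ReflTransGen A s t := by
  constructor
  · rintro ⟨_ | ⟨a, l⟩, hchain, -, hhead, hlast⟩
    · simp at hhead
    · obtain rfl : a = s := by simpa using hhead
      refine List.relationReflTransGen_of_exists_isChain_cons l hchain ?_
      simpa [List.getLast?_eq_some_getLast] using hlast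
  · intro h
    induction h using ReflTransGen.head_induction_on with
    | refl => exact ⟨[t], .singleton t, by simp, rfl, rfl⟩
    | @head a b hab _ ih =>
      obtain ⟨l, hchain, hnodup, hhead, hlast⟩ := ih
      by_cases ha : a ∈ l
      · -- Shortcut: a simple path from `b` through `a` already contains one starting at `a`.
        obtain ⟨p, q, rfl⟩ := List.append_of_mem ha
        exact ⟨a :: q, hchain.right_of_append, hnodup.of_append_right, rfl, by simpa using hlast⟩
      · refine ⟨a :: l, hchain.cons ?_, List.nodup_cons.2 ⟨ha, hnodup⟩, rfl, ?_⟩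
        · simpa [hhead] using hab
        · simp [List.getLast?_cons, hlast]

theorem eq_of_reflTransGen_of_leftUnique (hA : Relator.LeftUnique A) (hs : ∀ a, ¬ A a s)
    (ht : ∀ a, ¬ A a t) (hsv : ReflTransGen A s v) (htv : ReflTransGen A t v) : s = t := by
  have eq_of_source {x y : α} (hy : ∀ a, ¬ A a y) (h : ReflTransGen A x y) : x = y := by
    rcases ReflTransGen.cases_tail h with h | ⟨a, -, ha⟩
    · exact h.symm
    · exact absurd ha (hy a)
  rcases ReflTransGen.total_of_right_unique hA.flip (reflTransGen_swap.2 hsv)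
    (reflTransGen_swap.2 htv) with h | h
  · exact (eq_of_source hs (reflTransGen_swap.1 h)).symm
  · exact eq_of_source ht (reflTransGen_swap.1 h)

theorem le_of_reflTransGen {f : α → ℕ} (hf : ∀ a b, A a b → f a < f b)
    (h : ReflTransGen A s t) : f s ≤ f t := by
  induction h with
  | refl => exact le_rfl
  | tail _ hbc ih => exact ih.trans (hf _ _ hbc).le

theorem lt_of_reflTransGen_of_ne {f : α → ℕ} (hf : ∀ a b, A a b → f a < f b)
    (h : ReflTransGen A s t) (hne : s ≠ t) : f s < f t := by
  rcases ReflTransGen.cases_head h with rfl | ⟨a, hsa, hat⟩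
  · exact absurd rfl hne
  · exact (hf s a hsa).trans_le (le_of_reflTransGen hf hat)

theorem rel_of_reflTransGen_of_eq_add_one {f : α → ℕ} (hf : ∀ a b, A a b → f a < f b)
    (h : ReflTransGen A s t) (hst : f t = f s + 1) : A s t := by
  rcases ReflTransGen.cases_head h with rfl | ⟨a, hsa, hat⟩
  · omega
  · rcases eq_or_ne a t with rfl | hne
    · exact hsa
    · have := hf s a hsa
      have := lt_of_reflTransGen_of_ne hf hat hne
      omega

theorem isChain_iff_forall_mem_listEdges {l : List α} :
    l.IsChain A ↔ ∀ a b, (a, b) ∈ listEdges l → A a b := by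
  simp only [List.isChain_iff_getElem, listEdges, List.mem_iff_getElem]
  constructor
  · rintro h a b ⟨i, hi, hab⟩
    simp only [List.length_zip, List.length_tail] at hi
    obtain ⟨rfl, rfl⟩ : l[i] = a ∧ l[i + 1] = b := by simpa using hab
    exact h i (by omega)
  · exact fun h i hi => h _ _ ⟨i, by simp; omega, by simp⟩

theorem isChain_of_isChain_flatMap {ι : Type*} {l : List ι} {f : ι → List α}
    (h : (l.flatMap f).IsChain A) {i : ι} (hi : i ∈ l) : (f i).IsChain A := by
  obtain ⟨p, q, rfl⟩ := List.append_of_mem hi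
  rw [List.flatMap_append, List.flatMap_cons] at h
  exact h.right_of_append.left_of_append

end Reachability

theorem idxOf_eq_idxOf_add_one_of_mem_listEdges {l : List V} (hl : l.Nodup) {a b : V}
    (h : (a, b) ∈ listEdges l) : l.idxOf b = l.idxOf a + 1 := by
  have hchain : l.IsChain fun a b => l.idxOf b = l.idxOf a + 1 :=
    List.isChain_iff_getElem.2 fun i hi => by rw [hl.idxOf_getElem, hl.idxOf_getElem]
  exact isChain_iff_forall_mem_listEdges.1 hchain a b h

namespace RSPPSolution

variable {W : Type*} [DecidableEq W] {D K H : Finset (W × W)} {T : ℕ}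

theorem reflTransGen (hH : RSPPSolution D K T H) {a b : W} (h : (a, b) ∈ K) :
    ReflTransGen (Adj H) a b :=
  exists_diPath_iff_reflTransGen.1 (hH.2.2 _ h)

theorem exists_mem_of_mem (hH : RSPPSolution D K T H) {a b : W} (h : (a, b) ∈ H) :
    ∃ c, (a, c) ∈ D := by
  obtain ⟨hne, hab⟩ := hH.1 _ h
  rcases ReflTransGen.cases_head hab with hab | ⟨c, hac, -⟩
  · exact absurd hab hne
  · exact ⟨c, hac⟩

/- In a graded digraph a commodity that is itself an edge admits no detour. -/
theorem inter_subset (hH : RSPPSolution D K T H) {f : W → ℕ}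
    (hf : ∀ a b, (a, b) ∈ D → f b = f a + 1) : D ∩ K ⊆ H := by
  rintro ⟨a, b⟩ hab
  obtain ⟨hD, hK⟩ := Finset.mem_inter.1 hab
  have hf_lt : ∀ a b, Adj D a b → f a < f b := fun a b h => by have := hf a b h; omega
  exact rel_of_reflTransGen_of_eq_add_one
    (fun a b h => lt_of_reflTransGen_of_ne hf_lt (hH.1 _ h).2 (hH.1 _ h).1)
    (hH.reflTransGen hK) (hf a b hD)

end RSPPSolution

section Counting

open Classical in
/-- The vertices reachable from `S` in the digraph with edge set `H`, as a finite set: every such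
vertex lies in `S` or is the head of an edge. -/
noncomputable def reachableFrom (H : Finset (V × V)) (S : Finset V) : Finset V :=
  {v ∈ S ∪ H.image Prod.snd | ∃ s ∈ S, ReflTransGen (Adj H) s v}

variable {H : Finset (V × V)} {S X Y : Finset V} {a b v : V} {d : ℕ}

theorem mem_reachableFrom : v ∈ reachableFrom H S ↔ ∃ s ∈ S, ReflTransGen (Adj H) s v := by
  simp only [reachableFrom, Finset.mem_filter, Finset.mem_union, Finset.mem_image,
    and_iff_right_iff_imp]
  rintro ⟨s, hs, hsv⟩
  rcases ReflTransGen.cases_tail hsv with rfl | ⟨u, -, huv⟩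
  · exact .inl hs
  · exact .inr ⟨_, huv, rfl⟩

theorem mem_reachableFrom_of_reflTransGen (ha : a ∈ reachableFrom H S)
    (hab : ReflTransGen (Adj H) a b) : b ∈ reachableFrom H S := by
  obtain ⟨s, hs, hsa⟩ := mem_reachableFrom.1 ha
  exact mem_reachableFrom.2 ⟨s, hs, hsa.trans hab⟩

theorem reachableFrom_sdiff_subset_image_snd :
    reachableFrom H S \ S ⊆ {e ∈ H | e.1 ∈ reachableFrom H S}.image Prod.snd := by
  intro v hv
  obtain ⟨hv, hvS⟩ := Finset.mem_sdiff.1 hv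
  obtain ⟨s, hs, hsv⟩ := mem_reachableFrom.1 hv
  rcases ReflTransGen.cases_tail hsv with rfl | ⟨u, hsu, huv⟩
  · exact absurd hs hvS
  · exact Finset.mem_image.2
      ⟨(u, v), Finset.mem_filter.2 ⟨huv, mem_reachableFrom.2 ⟨s, hs, hsu⟩⟩, rfl⟩

theorem card_le_mul_card_of_outDeg_le (hdeg : ∀ v, outDeg H v ≤ d) {E : Finset (V × V)}
    (hEH : E ⊆ H) (hEX : ∀ e ∈ E, e.1 ∈ X) : #E ≤ d * #X :=
  Finset.card_le_mul_card_image_of_maps_to hEX d fun v _ =>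
    (Finset.card_le_card (Finset.filter_subset_filter _ hEH)).trans (hdeg v)

/- Every reachable vertex outside `S` is the head of an edge with reachable tail, so if `R` is the
set of reachable vertices, then `#(X ∩ R) + #Y ≤ #R ≤ #S + (d + 1) * #(X ∩ R)`. -/
theorem card_le_card_add_mul_card (hdeg : ∀ v, outDeg H v ≤ d + 1)
    (hX : ∀ a ∈ reachableFrom H S, ∀ b, (a, b) ∈ H → a ∈ X)
    (hY : Y ⊆ reachableFrom H S) (hXY : Disjoint X Y) :
    #Y ≤ #S + d * #(X ∩ reachableFrom H S) := by
  have card_edges : #{e ∈ H | e.1 ∈ reachableFrom H S} ≤ (d + 1) * #(X ∩ reachableFrom H S) := by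
    refine card_le_mul_card_of_outDeg_le hdeg (Finset.filter_subset _ _) fun e he => ?_
    obtain ⟨heH, heR⟩ := Finset.mem_filter.1 he
    exact Finset.mem_inter.2 ⟨hX _ heR _ heH, heR⟩
  have card_reach : #(reachableFrom H S) ≤ #{e ∈ H | e.1 ∈ reachableFrom H S} + #S :=
    Finset.card_le_card_sdiff_add_card.trans <| Nat.add_le_add_right
      ((Finset.card_le_card reachableFrom_sdiff_subset_image_snd).trans Finset.card_image_le) _
  have card_union : #(X ∩ reachableFrom H S) + #Y ≤ #(reachableFrom H S) := by
    rw [← Finset.card_union_of_disjoint (hXY.mono_left Finset.inter_subset_left)]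
    exact Finset.card_le_card (Finset.union_subset Finset.inter_subset_right hY)
  linarith

/- Equality in `card_le_card_add_mul_card` leaves no edge to spare: the edges form a forest rooted
at `S`. -/
theorem leftUnique_and_not_adj_of_card_le (hd : 0 < d) (hdeg : ∀ v, outDeg H v ≤ d + 1)
    (hX : ∀ e ∈ H, e.1 ∈ X) (hY : Y ⊆ reachableFrom H S) (hXY : Disjoint X Y)
    (hcard : #S + d * #X ≤ #Y) :
    Relator.LeftUnique (Adj H) ∧ ∀ a, ∀ s ∈ S, ¬ Adj H a s := by
  have X_subset : X ⊆ reachableFrom H S := by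
    have := hcard.trans <|
      card_le_card_add_mul_card hdeg (fun a _ b hab => hX (a, b) hab) hY hXY
    exact Finset.inter_eq_left.1 <| Finset.eq_of_subset_of_card_le Finset.inter_subset_left <|
      Nat.le_of_mul_le_mul_left (Nat.le_of_add_le_add_left this) hd
  have subset_image : (X ∪ Y) \ S ⊆ H.image Prod.snd :=
    (Finset.sdiff_subset_sdiff (Finset.union_subset X_subset hY) subset_rfl).trans <|
      reachableFrom_sdiff_subset_image_snd.trans <| Finset.image_subset_image <|
        Finset.filter_subset _ _
  have card_image : #(H.image Prod.snd) ≤ #H := Finset.card_image_le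
  have card_le : #H ≤ #((X ∪ Y) \ S) := by
    have card_H : #H ≤ (d + 1) * #X := card_le_mul_card_of_outDeg_le hdeg subset_rfl hX
    have card_union := Finset.card_le_card_sdiff_add_card (s := X ∪ Y) (t := S)
    rw [Finset.card_union_of_disjoint hXY] at card_union
    linarith
  have injOn : Set.InjOn Prod.snd (H : Set (V × V)) := Finset.injOn_of_card_image_eq <|
    card_image.antisymm <| card_le.trans <| Finset.card_le_card subset_image
  have image_eq : (X ∪ Y) \ S = H.image Prod.snd :=
    Finset.eq_of_subset_of_card_le subset_image <| card_image.trans card_le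
  refine ⟨fun a b c hac hbc => congrArg Prod.fst (injOn hac hbc rfl), fun a s hs has => ?_⟩
  have hs_mem : s ∈ (X ∪ Y) \ S := image_eq ▸ Finset.mem_image_of_mem Prod.snd has
  exact (Finset.mem_sdiff.1 hs_mem).2 hs

end Counting

section OutNeighbors

/-- The edge set of the digraph in which each `v ∈ X` has the set `out v` of out-neighbours. -/
def edgesOfOutNeighbors (X : Finset V) (out : V → Finset V) : Finset (V × V) :=
  X.biUnion fun v => (out v).image (Prod.mk v)

variable {X : Finset V} {out : V → Finset V} {a b : V} {d : ℕ}

theorem mem_edgesOfOutNeighbors : (a, b) ∈ edgesOfOutNeighbors X out ↔ a ∈ X ∧ b ∈ out a := by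
  simp only [edgesOfOutNeighbors, Finset.mem_biUnion, Finset.mem_image, Prod.mk.injEq]
  grind

theorem outDeg_edgesOfOutNeighbors_le (h : ∀ v, #(out v) ≤ d) (v : V) :
    outDeg (edgesOfOutNeighbors X out) v ≤ d := by
  have subset_image : {e ∈ edgesOfOutNeighbors X out | e.1 = v} ⊆ (out v).image (Prod.mk v) := by
    rintro ⟨a, b⟩ he
    obtain ⟨hab, rfl : a = v⟩ := Finset.mem_filter.1 he
    exact Finset.mem_image_of_mem _ (mem_edgesOfOutNeighbors.1 hab).2
  exact (Finset.card_le_card subset_image).trans (Finset.card_image_le.trans (h v))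

end OutNeighbors

section Arithmetic

variable {ι : Type*} {I : Finset ι} {a : ι → ℕ} {C : ℕ}

/- With two or four summands all bounds would be equalities, so that `a` would be constant. -/
theorem card_eq_three_of_sum_eq (ha : Set.InjOn a I) (hC : 0 < C)
    (hbound : ∀ i ∈ I, C ≤ 4 * a i ∧ 2 * a i ≤ C) (hsum : ∑ i ∈ I, a i = C) : #I = 3 := by
  have card_le_one_of_mul_eq {c : ℕ} (hc : 0 < c) (h : ∀ i ∈ I, c * a i = C) : #I ≤ 1 :=
    Finset.card_le_one.2 fun i hi j hj =>
      ha hi hj (Nat.eq_of_mul_eq_mul_left hc ((h i hi).trans (h j hj).symm))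
  have sum_const : ∑ _i ∈ I, C = #I * C := by rw [Finset.sum_const, smul_eq_mul]
  have sum_mul (c : ℕ) : ∑ i ∈ I, c * a i = c * C := by rw [← Finset.mul_sum, hsum]
  have sum_two_le := Finset.sum_le_sum fun i hi => (hbound i hi).2
  have le_sum_four := Finset.sum_le_sum fun i hi => (hbound i hi).1
  rw [sum_const, sum_mul] at sum_two_le le_sum_four
  have two_le : 2 ≤ #I := Nat.le_of_mul_le_mul_right sum_two_le hC
  have le_four : #I ≤ 4 := Nat.le_of_mul_le_mul_right le_sum_four hC
  have ne_two : #I ≠ 2 := fun h => by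
    have := card_le_one_of_mul_eq two_pos <|
      (Finset.sum_eq_sum_iff_of_le fun i hi => (hbound i hi).2).1 (by rw [sum_mul, sum_const, h])
    omega
  have ne_four : #I ≠ 4 := fun h => by
    have := card_le_one_of_mul_eq four_pos fun i hi => Eq.symm <|
      (Finset.sum_eq_sum_iff_of_le fun i hi => (hbound i hi).1).1
        (by rw [sum_mul, sum_const, h]) i hi
    omega
  omega

theorem exists_surjOn_range_of_sum_fiber_eq {τ : Type*} [Fintype ι] [DecidableEq τ] {f : ι → τ}
    (hf : ∀ t, ∑ i with f i = t, a i = C) :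
    ∃ slot : ι → ℕ → ℕ, (∀ i, ∀ j < a i, slot i j < C) ∧
      ∀ t, ∀ k < C, ∃ i, f i = t ∧ ∃ j < a i, slot i j = k := by
  have exists_bijOn (t : τ) : ∃ g : (Σ _ : ι, ℕ) → ℕ,
      Set.BijOn g (({i | f i = t} : Finset ι).sigma fun i => Finset.range (a i))
        (Finset.range C) := by
    refine (Finset.finite_toSet _).exists_bijOn_of_encard_eq ?_
    simp only [Set.encard_coe_eq_coe_finsetCard, Finset.card_sigma, Finset.card_range, hf]
  choose g hg using exists_bijOn
  refine ⟨fun i j => g (f i) ⟨i, j⟩, fun i j hj => ?_, fun t k hk => ?_⟩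
  · simpa using (hg (f i)).mapsTo (x := ⟨i, j⟩) (by simpa using hj)
  · obtain ⟨⟨i, j⟩, hij, hgk⟩ := (hg t).surjOn (by simpa using hk)
    obtain ⟨rfl, hj⟩ : f i = t ∧ j < a i := by simpa using hij
    exact ⟨i, rfl, j, hj, hgk⟩

end Arithmetic

section Construction

variable {m B : ℕ} {n : Fin (3 * m) → ℕ} {T : Finset (Fin m)} {I : Finset (Fin (3 * m))}

/-- The branching vertices `s_t`, `s'_t`, `r_t^j` for `t ∈ T` and `w_i^j` for `i ∈ I`. For full `T`
and `I` they are the vertices of the main path, which are exactly the tails of the edges. -/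
def innerVertices (B : ℕ) (n : Fin (3 * m) → ℕ) (T : Finset (Fin m)) (I : Finset (Fin (3 * m))) :
    Finset (Vtx m) :=
  T.image Vtx.s ∪ T.image Vtx.s' ∪
    (I.sigma fun i => Finset.range (n i)).image (fun p => .w p.1 p.2) ∪
    (T ×ˢ Finset.range B).image fun p => .r p.1 p.2

/-- The vertices without outgoing edges: `w̃_i` for `i ∈ I`, and `r̃_t^j`, `r̄_t^j` for `t ∈ T`. -/
def leafVertices (B : ℕ) (T : Finset (Fin m)) (I : Finset (Fin (3 * m))) : Finset (Vtx m) :=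
  I.image Vtx.wt ∪ (T ×ˢ Finset.range B).image (fun p => .rt p.1 p.2) ∪
    (T ×ˢ Finset.range B).image fun p => .rb p.1 p.2

/-- The commodities that are themselves edges of the constructed digraph: all of them but the
`(s_i, r_i^j)`. -/
def directCommodities (m B : ℕ) (n : Fin (3 * m) → ℕ) : Finset (Vtx m × Vtx m) :=
  hardD m B n ∩ hardK m B n

theorem disjoint_innerVertices_leafVertices :
    Disjoint (innerVertices B n T I) (leafVertices B T I) := by
  rw [Finset.disjoint_left]
  rintro (_ | _ | _ | _ | _ | _ | _) <;> simp [innerVertices, leafVertices]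

theorem card_innerVertices_le :
    #(innerVertices B n T I) ≤ 2 * #T + ∑ i ∈ I, n i + #T * B := by
  have card_s : #(T.image Vtx.s) ≤ #T := Finset.card_image_le
  have card_s' : #(T.image Vtx.s') ≤ #T := Finset.card_image_le
  have card_w : #((I.sigma fun i => Finset.range (n i)).image fun p => (.w p.1 p.2 : Vtx m)) ≤
      ∑ i ∈ I, n i := Finset.card_image_le.trans_eq (by simp)
  have card_r : #((T ×ˢ Finset.range B).image fun p => (.r p.1 p.2 : Vtx m)) ≤ #T * B :=
    Finset.card_image_le.trans_eq (by simp)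
  have := (Finset.card_union_le _ _).trans <| add_le_add ((Finset.card_union_le _ _).trans <|
    add_le_add ((Finset.card_union_le _ _).trans <| add_le_add card_s card_s') card_w) card_r
  rw [innerVertices]
  linarith

theorem card_leafVertices : #(leafVertices B T I) = #I + 2 * (#T * B) := by
  have card_rt : #((T ×ˢ Finset.range B).image fun p => (.rt p.1 p.2 : Vtx m)) = #T * B := by
    rw [Finset.card_image_of_injective _ fun p q h => by simpa [Prod.ext_iff] using h]
    simp
  have card_rb : #((T ×ˢ Finset.range B).image fun p => (.rb p.1 p.2 : Vtx m)) = #T * B := by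
    rw [Finset.card_image_of_injective _ fun p q h => by simpa [Prod.ext_iff] using h]
    simp
  rw [leafVertices, Finset.card_union_of_disjoint, Finset.card_union_of_disjoint, card_rt, card_rb,
    Finset.card_image_of_injective _ fun i j h => by simpa using h]
  · ring
  all_goals
    rw [Finset.disjoint_left]
    rintro (_ | _ | _ | _ | _ | _ | _) <;> simp

theorem mem_mainPath {v : Vtx m} :
    v ∈ mainPath m B n ↔ v ∈ innerVertices B n Finset.univ Finset.univ := by
  cases v <;> simp [mainPath, innerVertices]

theorem nodup_mainPath : (mainPath m B n).Nodup := by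
  have nodup_blocks {k : ℕ} {l : Fin k → List (Vtx m)} (hl : ∀ i, (l i).Nodup)
      (hd : ∀ i j, i ≠ j → (l i).Disjoint (l j)) : ((List.finRange k).flatMap l).Nodup :=
    List.nodup_flatMap.2 ⟨fun i _ => hl i, (List.nodup_finRange k).imp fun h => hd _ _ h⟩
  refine ((nodup_blocks ?_ ?_).append (nodup_blocks ?_ ?_) ?_).append (nodup_blocks ?_ ?_) ?_
  case refine_3 | refine_6 => exact fun _ => List.nodup_range.map fun _ _ h => by simpa using h
  all_goals
    simp only [List.disjoint_left, List.mem_append, List.mem_flatMap, List.mem_map, List.mem_range,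
      List.mem_finRange, List.mem_cons, List.nodup_cons]
    grind

theorem mem_hardD {a b : Vtx m} :
    (a, b) ∈ hardD m B n ↔ (a, b) ∈ listEdges (mainPath m B n) ∨
      (∃ i, a = .w i (n i - 1) ∧ b = .wt i) ∨
      ∃ t, ∃ j < B, a = .r t j ∧ (b = .rt t j ∨ b = .rb t j) := by
  simp only [hardD, Finset.mem_union, List.mem_toFinset, List.mem_map, List.mem_finRange, true_and,
    List.mem_flatMap, List.mem_range, List.mem_cons, Prod.mk.injEq, List.not_mem_nil, or_false,
    or_assoc, ← and_or_left, @eq_comm _ a, @eq_comm _ b]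

theorem mem_hardK {a b : Vtx m} :
    (a, b) ∈ hardK m B n ↔ (∃ t, a = .s t ∧ b = .s' t) ∨
      (∃ t, ∃ j < B, a = .s t ∧ b = .r t j) ∨
      (∃ i, ∃ j < n i - 1, a = .w i j ∧ b = .w i (j + 1)) ∨
      (∃ i, a = .w i (n i - 1) ∧ b = .wt i) ∨
      ∃ t, ∃ j < B, a = .r t j ∧ (b = .rt t j ∨ b = .rb t j) := by
  simp only [hardK, List.mem_append, List.mem_toFinset, List.mem_map,
    List.mem_finRange, true_and, List.mem_flatMap, List.mem_range, List.mem_cons,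
    Prod.mk.injEq, List.not_mem_nil, or_false, or_assoc, ← and_or_left,
    @eq_comm _ a, @eq_comm _ b]

theorem isChain_mainPath : (mainPath m B n).IsChain (Adj (hardD m B n)) :=
  isChain_iff_forall_mem_listEdges.2 fun _ _ h => mem_hardD.2 (.inl h)

theorem s_s'_mem_directCommodities (t : Fin m) :
    (Vtx.s t, Vtx.s' t) ∈ directCommodities m B n := by
  have isChain := isChain_of_isChain_flatMap
    (isChain_mainPath (B := B) (n := n)).left_of_append.left_of_append (List.mem_finRange t)
  exact Finset.mem_inter.2 ⟨List.isChain_pair.1 isChain, mem_hardK.2 (.inl ⟨t, rfl, rfl⟩)⟩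

theorem w_w_mem_directCommodities {i : Fin (3 * m)} {j : ℕ} (hj : j + 1 < n i) :
    (Vtx.w i j, Vtx.w i (j + 1)) ∈ directCommodities m B n := by
  have isChain := isChain_of_isChain_flatMap
    (isChain_mainPath (B := B) (n := n)).left_of_append.right_of_append (List.mem_finRange i)
  rw [List.isChain_map, List.isChain_range] at isChain
  exact Finset.mem_inter.2 ⟨isChain j (by omega),
    mem_hardK.2 (.inr (.inr (.inl ⟨i, j, by omega, rfl, rfl⟩)))⟩

theorem w_wt_mem_directCommodities {i : Fin (3 * m)} {j : ℕ} (hj : j + 1 = n i) :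
    (Vtx.w i j, Vtx.wt i) ∈ directCommodities m B n := by
  obtain rfl : j = n i - 1 := by omega
  simp [directCommodities, mem_hardD, mem_hardK]

theorem r_rt_mem_directCommodities {t : Fin m} {j : ℕ} (hj : j < B) :
    (Vtx.r t j, Vtx.rt t j) ∈ directCommodities m B n := by
  simp [directCommodities, mem_hardD, mem_hardK, hj]

theorem r_rb_mem_directCommodities {t : Fin m} {j : ℕ} (hj : j < B) :
    (Vtx.r t j, Vtx.rb t j) ∈ directCommodities m B n := by
  simp [directCommodities, mem_hardD, mem_hardK, hj]

theorem s_r_mem_hardK {t : Fin m} {j : ℕ} (hj : j < B) : (Vtx.s t, Vtx.r t j) ∈ hardK m B n := by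
  simp [mem_hardK, hj]

theorem mem_innerVertices_of_mem_hardD (hpos : ∀ i, 0 < n i) {a b : Vtx m}
    (h : (a, b) ∈ hardD m B n) : a ∈ innerVertices B n Finset.univ Finset.univ := by
  rcases mem_hardD.1 h with h | ⟨i, rfl, -⟩ | ⟨t, j, hj, rfl, -⟩
  · exact mem_mainPath.1 (List.of_mem_zip h).1
  · simp [innerVertices, hpos i]
  · simp [innerVertices, hj]

/-- The length of the directed path from `s_1` to a vertex of the construction. (The unused values
of `Vtx m` get a junk level.) -/
def level (m B : ℕ) (n : Fin (3 * m) → ℕ) : Vtx m → ℕ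
  | .wt i => (mainPath m B n).idxOf (.w i (n i - 1)) + 1
  | .rt t j => (mainPath m B n).idxOf (.r t j) + 1
  | .rb t j => (mainPath m B n).idxOf (.r t j) + 1
  | v => (mainPath m B n).idxOf v

theorem level_eq_idxOf {v : Vtx m} (hv : v ∈ mainPath m B n) :
    level m B n v = (mainPath m B n).idxOf v := by
  rw [mem_mainPath] at hv
  cases v <;> simp [innerVertices, level] at hv ⊢

theorem level_eq_add_one {a b : Vtx m} (h : (a, b) ∈ hardD m B n) :
    level m B n b = level m B n a + 1 := by
  rcases mem_hardD.1 h with h | ⟨i, rfl, rfl⟩ | ⟨t, j, -, rfl, rfl | rfl⟩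
  · obtain ⟨ha, hb⟩ := List.of_mem_zip h
    rw [level_eq_idxOf ha, level_eq_idxOf (List.mem_of_mem_tail hb)]
    exact idxOf_eq_idxOf_add_one_of_mem_listEdges nodup_mainPath h
  all_goals rfl

theorem pairwise_mainPath : (mainPath m B n).Pairwise (ReflTransGen (Adj (hardD m B n))) :=
  (isChain_mainPath.imp fun _ _ h => ReflTransGen.single h).pairwise

theorem tcAdj_s_w (t : Fin m) {i : Fin (3 * m)} {j : ℕ} (hj : j < n i) :
    TCAdj (hardD m B n) (.s t) (.w i j) :=
  ⟨nofun, (List.pairwise_append.1 (List.pairwise_append.1 pairwise_mainPath).1).2.2 _ (by simp) _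
    (by simp [hj])⟩

theorem tcAdj_s'_w (t : Fin m) {i : Fin (3 * m)} {j : ℕ} (hj : j < n i) :
    TCAdj (hardD m B n) (.s' t) (.w i j) :=
  ⟨nofun, (List.pairwise_append.1 (List.pairwise_append.1 pairwise_mainPath).1).2.2 _ (by simp) _
    (by simp [hj])⟩

theorem tcAdj_w_r {i : Fin (3 * m)} {j : ℕ} (hj : j < n i) {t : Fin m} {k : ℕ} (hk : k < B) :
    TCAdj (hardD m B n) (.w i j) (.r t k) :=
  ⟨nofun, (List.pairwise_append.1 pairwise_mainPath).2.2 _ (by simp [hj]) _ (by simp [hk])⟩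

theorem tcAdj_of_mem_directCommodities {a b : Vtx m} (h : (a, b) ∈ directCommodities m B n) :
    TCAdj (hardD m B n) a b := by
  have hD := Finset.mem_of_mem_inter_left h
  refine ⟨?_, .single hD⟩
  rintro rfl
  have := level_eq_add_one hD
  omega

theorem reflTransGen_w_w {H : Finset (Vtx m × Vtx m)} {i : Fin (3 * m)}
    (hH : ∀ j, j + 1 < n i → (.w i j, .w i (j + 1)) ∈ H) {j k : ℕ} (hjk : j ≤ k) (hk : k < n i) :
    ReflTransGen (Adj H) (.w i j) (.w i k) := by
  induction k, hjk using Nat.le_induction with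
  | base => exact .refl
  | succ k _ ih => exact (ih (by omega)).tail (hH k hk)

end Construction

section Packing

variable {m B : ℕ} {n : Fin (3 * m) → ℕ} {f : Fin (3 * m) → Fin m}
  {τ : Fin m → Fin 3 → Fin (3 * m)} {slot : Fin (3 * m) → ℕ → ℕ}

/-- The out-neighbours in the solution graph built from a partition into triples: `f i` is the
triple containing `i`, `τ t` lists the triple `t`, and `slot` matches the `B` vertices `w_i^j` with
`f i = t` to the `B` vertices `r_t^k`. -/
def packingOut (n : Fin (3 * m) → ℕ) (f : Fin (3 * m) → Fin m) (τ : Fin m → Fin 3 → Fin (3 * m))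
    (slot : Fin (3 * m) → ℕ → ℕ) : Vtx m → Finset (Vtx m)
  | .s t => {.s' t, .w (τ t 0) 0}
  | .s' t => {.w (τ t 1) 0, .w (τ t 2) 0}
  | .w i j => {if j + 1 < n i then .w i (j + 1) else .wt i, .r (f i) (slot i j)}
  | .r t j => {.rt t j, .rb t j}
  | _ => ∅

/-- The solution graph with out-neighbours `packingOut`. -/
def packingGraph (B : ℕ) (n : Fin (3 * m) → ℕ) (f : Fin (3 * m) → Fin m)
    (τ : Fin m → Fin 3 → Fin (3 * m)) (slot : Fin (3 * m) → ℕ → ℕ) : Finset (Vtx m × Vtx m) :=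
  edgesOfOutNeighbors (innerVertices B n Finset.univ Finset.univ) (packingOut n f τ slot)

theorem outDeg_packingGraph_le (v : Vtx m) : outDeg (packingGraph B n f τ slot) v ≤ 2 :=
  outDeg_edgesOfOutNeighbors_le (fun v => by cases v <;> simp [packingOut, Finset.card_le_two]) v

theorem tcAdj_of_mem_packingGraph (hpos : ∀ i, 0 < n i) (hslot : ∀ i, ∀ j < n i, slot i j < B)
    {a b : Vtx m} (h : (a, b) ∈ packingGraph B n f τ slot) : TCAdj (hardD m B n) a b := by
  obtain ⟨ha, hb⟩ := mem_edgesOfOutNeighbors.1 h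
  cases a with
  | s t =>
    obtain rfl | rfl : b = .s' t ∨ b = .w (τ t 0) 0 := by simpa [packingOut] using hb
    · exact tcAdj_of_mem_directCommodities (s_s'_mem_directCommodities t)
    · exact tcAdj_s_w t (hpos _)
  | s' t =>
    obtain rfl | rfl : b = .w (τ t 1) 0 ∨ b = .w (τ t 2) 0 := by simpa [packingOut] using hb
    all_goals exact tcAdj_s'_w t (hpos _)
  | w i j =>
    have hj : j < n i := by simpa [innerVertices] using ha
    rcases Finset.mem_insert.1 hb with rfl | hb
    · split_ifs with hj'
      · exact tcAdj_of_mem_directCommodities (w_w_mem_directCommodities hj')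
      · exact tcAdj_of_mem_directCommodities (w_wt_mem_directCommodities (by omega))
    · rw [Finset.mem_singleton.1 hb]
      exact tcAdj_w_r hj (hslot i j hj)
  | r t j =>
    have hj : j < B := by simpa [innerVertices] using ha
    obtain rfl | rfl : b = .rt t j ∨ b = .rb t j := by simpa [packingOut] using hb
    · exact tcAdj_of_mem_directCommodities (r_rt_mem_directCommodities hj)
    · exact tcAdj_of_mem_directCommodities (r_rb_mem_directCommodities hj)
  | _ => simp [packingOut] at hb

theorem w_w_mem_packingGraph {i : Fin (3 * m)} {j : ℕ} (hj : j + 1 < n i) :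
    (.w i j, .w i (j + 1)) ∈ packingGraph B n f τ slot :=
  mem_edgesOfOutNeighbors.2
    ⟨by simp [innerVertices, Nat.lt_of_succ_lt hj], by simp [packingOut, hj]⟩

theorem s_s'_mem_packingGraph (t : Fin m) : (.s t, .s' t) ∈ packingGraph B n f τ slot :=
  mem_edgesOfOutNeighbors.2 ⟨by simp [innerVertices], by simp [packingOut]⟩

theorem reflTransGen_packingGraph_s_w (hτ : ∀ i, ∃ k, τ (f i) k = i) (i : Fin (3 * m)) :
    ReflTransGen (Adj (packingGraph B n f τ slot)) (.s (f i)) (.w i 0) := by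
  have adj_s : Adj (packingGraph B n f τ slot) (.s (f i)) (.w (τ (f i) 0) 0) :=
    mem_edgesOfOutNeighbors.2 ⟨by simp [innerVertices], by simp [packingOut]⟩
  have adj_s' {k : Fin 3} (hk : k = 1 ∨ k = 2) :
      Adj (packingGraph B n f τ slot) (.s' (f i)) (.w (τ (f i) k) 0) :=
    mem_edgesOfOutNeighbors.2
      ⟨by simp [innerVertices], by rcases hk with rfl | rfl <;> simp [packingOut]⟩
  obtain ⟨k, hk⟩ := hτ i
  rw [← congrArg (Vtx.w · 0) hk]
  obtain rfl | hk : k = 0 ∨ k = 1 ∨ k = 2 := by omega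
  · exact .single adj_s
  · exact .head (s_s'_mem_packingGraph _) (.single (adj_s' hk))

theorem reflTransGen_packingGraph_s_r (hτ : ∀ i, ∃ k, τ (f i) k = i) {i : Fin (3 * m)} {j : ℕ}
    (hj : j < n i) :
    ReflTransGen (Adj (packingGraph B n f τ slot)) (.s (f i)) (.r (f i) (slot i j)) := by
  have adj_w_r : Adj (packingGraph B n f τ slot) (.w i j) (.r (f i) (slot i j)) :=
    mem_edgesOfOutNeighbors.2 ⟨by simp [innerVertices, hj], by simp [packingOut]⟩
  exact ((reflTransGen_packingGraph_s_w hτ i).trans <|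
    reflTransGen_w_w (fun _ => w_w_mem_packingGraph) j.zero_le hj).tail adj_w_r

theorem rsppSolution_packingGraph (hpos : ∀ i, 0 < n i) (hτ : ∀ i, ∃ k, τ (f i) k = i)
    (hslot : ∀ i, ∀ j < n i, slot i j < B)
    (hslot_surj : ∀ t, ∀ k < B, ∃ i, f i = t ∧ ∃ j < n i, slot i j = k) :
    RSPPSolution (hardD m B n) (hardK m B n) 2 (packingGraph B n f τ slot) := by
  refine ⟨fun e he => tcAdj_of_mem_packingGraph hpos hslot he, outDeg_packingGraph_le, ?_⟩
  rintro ⟨a, b⟩ hab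
  refine exists_diPath_iff_reflTransGen.2 ?_
  rcases mem_hardK.1 hab with ⟨t, rfl, rfl⟩ | ⟨t, k, hk, rfl, rfl⟩ | ⟨i, j, hj, rfl, rfl⟩ |
    ⟨i, rfl, rfl⟩ | ⟨t, j, hj, rfl, hb⟩
  · exact .single (s_s'_mem_packingGraph t)
  · obtain ⟨i, rfl, j, hj, rfl⟩ := hslot_surj t k hk
    exact reflTransGen_packingGraph_s_r hτ hj
  · exact .single (w_w_mem_packingGraph (by omega))
  · refine .single (mem_edgesOfOutNeighbors.2 ⟨by simp [innerVertices, hpos], ?_⟩)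
    simp [packingOut, Nat.sub_add_cancel (hpos i)]
  · exact .single (mem_edgesOfOutNeighbors.2
      ⟨by simp [innerVertices, hj], by simpa [packingOut] using hb⟩)

theorem exists_rsppSolution_of_threePartition (hpos : ∀ i, 0 < n i) (h : ThreePartition m B n) :
    ∃ H, RSPPSolution (hardD m B n) (hardK m B n) 2 H := by
  obtain ⟨f, hf⟩ := h
  have exists_enumeration (t : Fin m) : ∃ τ : Fin 3 → Fin (3 * m), ∀ i, f i = t → ∃ k, τ k = i :=
    let e := Finset.equivFinOfCardEq (hf t).1
    ⟨fun k => e.symm k, fun i hi => ⟨e ⟨i, by simpa using hi⟩, by simp⟩⟩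
  choose τ hτ using exists_enumeration
  obtain ⟨slot, hslot, hslot_surj⟩ := exists_surjOn_range_of_sum_fiber_eq fun t => (hf t).2
  exact ⟨_, rsppSolution_packingGraph hpos (fun i => hτ _ i rfl) hslot hslot_surj⟩

end Packing

section ReachedBlocks

variable {m : ℕ} {H : Finset (Vtx m × Vtx m)} {T : Finset (Fin m)}

/-- The indices `i` whose block `w_i^1, …, w_i^{n_i}` is entered from some `s_t` with `t ∈ T`:
since the block is a path to `w̃_i` in every solution graph, it suffices to look at `w̃_i`. -/
noncomputable def reachedBlocks (H : Finset (Vtx m × Vtx m)) (T : Finset (Fin m)) :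
    Finset (Fin (3 * m)) :=
  {i | Vtx.wt i ∈ reachableFrom H (T.image Vtx.s)}

theorem mem_reachedBlocks {i : Fin (3 * m)} :
    i ∈ reachedBlocks H T ↔ ∃ t ∈ T, ReflTransGen (Adj H) (.s t) (.wt i) := by
  simp [reachedBlocks, mem_reachableFrom]

end ReachedBlocks

namespace RSPPSolution

variable {m B d : ℕ} {n : Fin (3 * m) → ℕ} {H : Finset (Vtx m × Vtx m)} {T : Finset (Fin m)}

theorem directCommodities_subset (hH : RSPPSolution (hardD m B n) (hardK m B n) d H) :
    directCommodities m B n ⊆ H :=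
  hH.inter_subset fun _ _ => level_eq_add_one

theorem reflTransGen_w_wt (hH : RSPPSolution (hardD m B n) (hardK m B n) d H) {i : Fin (3 * m)}
    {j : ℕ} (hj : j < n i) : ReflTransGen (Adj H) (.w i j) (.wt i) :=
  (reflTransGen_w_w (fun _ h => hH.directCommodities_subset (w_w_mem_directCommodities h))
    (Nat.le_sub_one_of_lt hj) (by omega)).tail
    (hH.directCommodities_subset (w_wt_mem_directCommodities (by omega)))

theorem leafVertices_subset_reachableFrom (hH : RSPPSolution (hardD m B n) (hardK m B n) d H) :
    leafVertices B T (reachedBlocks H T) ⊆ reachableFrom H (T.image Vtx.s) := by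
  have reach_r {t : Fin m} (ht : t ∈ T) {j : ℕ} (hj : j < B) :
      Vtx.r t j ∈ reachableFrom H (T.image Vtx.s) :=
    mem_reachableFrom.2 ⟨_, Finset.mem_image_of_mem _ ht, hH.reflTransGen (s_r_mem_hardK hj)⟩
  have adj {a b : Vtx m} (h : (a, b) ∈ directCommodities m B n) : ReflTransGen (Adj H) a b :=
    .single (hH.directCommodities_subset h)
  intro v hv
  simp only [leafVertices, Finset.mem_union, Finset.mem_image, Finset.mem_product,
    Finset.mem_range] at hv
  rcases hv with (⟨i, hi, rfl⟩ | ⟨⟨t, j⟩, ⟨ht, hj⟩, rfl⟩) | ⟨⟨t, j⟩, ⟨ht, hj⟩, rfl⟩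
  · exact (Finset.mem_filter.1 hi).2
  · exact mem_reachableFrom_of_reflTransGen (reach_r ht hj) (adj (r_rt_mem_directCommodities hj))
  · exact mem_reachableFrom_of_reflTransGen (reach_r ht hj) (adj (r_rb_mem_directCommodities hj))

theorem fst_mem_innerVertices (hH : RSPPSolution (hardD m B n) (hardK m B n) d H)
    (hpos : ∀ i, 0 < n i) {e : Vtx m × Vtx m} (he : e ∈ H) :
    e.1 ∈ innerVertices B n Finset.univ Finset.univ := by
  obtain ⟨c, hc⟩ := hH.exists_mem_of_mem he
  exact mem_innerVertices_of_mem_hardD hpos hc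

theorem fst_mem_innerVertices_reachedBlocks
    (hH : RSPPSolution (hardD m B n) (hardK m B n) d H) (hpos : ∀ i, 0 < n i)
    (hT : ∀ t, ∀ u ∈ T, ∀ v, ReflTransGen (Adj H) (.s u) v →
      ReflTransGen (Adj H) (.s t) v → t ∈ T)
    {a b : Vtx m} (ha : a ∈ reachableFrom H (T.image Vtx.s)) (hab : (a, b) ∈ H) :
    a ∈ innerVertices B n T (reachedBlocks H T) := by
  obtain ⟨u, hu, hua⟩ : ∃ u ∈ T, ReflTransGen (Adj H) (.s u) a := by
    simpa [mem_reachableFrom] using ha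
  have mem_T {t : Fin m} (h : ReflTransGen (Adj H) (.s t) a) : t ∈ T := hT t u hu a hua h
  have ha_inner := hH.fst_mem_innerVertices hpos hab
  cases a with
  | s t => simp [innerVertices, mem_T .refl]
  | s' t =>
    have := hH.directCommodities_subset (s_s'_mem_directCommodities t)
    simp [innerVertices, mem_T (.single this)]
  | w i j =>
    have hj : j < n i := by simpa [innerVertices] using ha_inner
    have hi : i ∈ reachedBlocks H T :=
      mem_reachedBlocks.2 ⟨u, hu, hua.trans (hH.reflTransGen_w_wt hj)⟩
    simp [innerVertices, hi, hj]
  | r t j =>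
    have hj : j < B := by simpa [innerVertices] using ha_inner
    simp [innerVertices, mem_T (hH.reflTransGen (s_r_mem_hardK hj)), hj]
  | _ => simp [innerVertices] at ha_inner

/- There are at most as many leaves below the `s_t` with `t ∈ T` as sources and inner vertices
together; the contribution `#T * B` of the inner vertices `r_t^j` cancels. -/
theorem card_reachedBlocks_add_le (hH : RSPPSolution (hardD m B n) (hardK m B n) 2 H)
    (hpos : ∀ i, 0 < n i)
    (hT : ∀ t, ∀ u ∈ T, ∀ v, ReflTransGen (Adj H) (.s u) v →
      ReflTransGen (Adj H) (.s t) v → t ∈ T) :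
    #(reachedBlocks H T) + #T * B ≤ 3 * #T + ∑ i ∈ reachedBlocks H T, n i := by
  have card_leaves := card_le_card_add_mul_card (d := 1) hH.2.1
    (fun a ha b => hH.fst_mem_innerVertices_reachedBlocks hpos hT ha)
    hH.leafVertices_subset_reachableFrom disjoint_innerVertices_leafVertices
  have card_inner : #(innerVertices B n T (reachedBlocks H T) ∩ reachableFrom H (T.image Vtx.s)) ≤
      2 * #T + ∑ i ∈ reachedBlocks H T, n i + #T * B :=
    (Finset.card_le_card Finset.inter_subset_left).trans card_innerVertices_le
  have card_sources : #(T.image (Vtx.s (m := m))) ≤ #T := Finset.card_image_le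
  rw [card_leafVertices] at card_leaves
  linarith

theorem reachedBlocks_univ (hH : RSPPSolution (hardD m B n) (hardK m B n) 2 H)
    (htwo : ∀ i, 2 ≤ n i) (hsum : ∑ i, n i = m * B) :
    reachedBlocks H Finset.univ = Finset.univ := by
  have card_le := hH.card_reachedBlocks_add_le (T := Finset.univ)
    (fun i => two_pos.trans_le (htwo i)) (fun t _ _ _ _ _ => Finset.mem_univ t)
  have card_compl := Finset.card_add_card_compl (reachedBlocks H Finset.univ)
  have sum_compl := Finset.sum_add_sum_compl (reachedBlocks H Finset.univ) n
  have two_mul_card_le : 2 * #(reachedBlocks H Finset.univ)ᶜ ≤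
      ∑ i ∈ (reachedBlocks H Finset.univ)ᶜ, n i := by
    rw [mul_comm]
    exact Finset.card_nsmul_le_sum _ n 2 fun i _ => htwo i
  rw [hsum] at sum_compl
  simp only [Finset.card_univ, Fintype.card_fin] at card_le card_compl
  rw [← Finset.compl_eq_empty_iff, ← Finset.card_eq_zero]
  omega

theorem eq_of_reflTransGen_s (hH : RSPPSolution (hardD m B n) (hardK m B n) 2 H)
    (htwo : ∀ i, 2 ≤ n i) (hsum : ∑ i, n i = m * B) {t u : Fin m} {v : Vtx m}
    (ht : ReflTransGen (Adj H) (.s t) v) (hu : ReflTransGen (Adj H) (.s u) v) : t = u := by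
  have leaves_subset := hH.leafVertices_subset_reachableFrom (T := Finset.univ)
  rw [hH.reachedBlocks_univ htwo hsum] at leaves_subset
  have card_inner := card_innerVertices_le (B := B) (n := n) (T := Finset.univ) (I := Finset.univ)
  have card_sources : #(Finset.univ.image (Vtx.s (m := m))) ≤ m :=
    Finset.card_image_le.trans_eq (by simp)
  obtain ⟨leftUnique, not_adj⟩ := leftUnique_and_not_adj_of_card_le one_pos hH.2.1
    (fun e => hH.fst_mem_innerVertices fun i => two_pos.trans_le (htwo i)) leaves_subset
    disjoint_innerVertices_leafVertices (by
      rw [card_leafVertices]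
      simp only [Finset.card_univ, Fintype.card_fin, hsum] at card_inner ⊢
      linarith)
  have not_adj_s (t : Fin m) (a : Vtx m) : ¬ Adj H a (.s t) := not_adj a _ (by simp)
  simpa using eq_of_reflTransGen_of_leftUnique leftUnique (not_adj_s t) (not_adj_s u) ht hu

theorem exists_sum_fiber_eq (hH : RSPPSolution (hardD m B n) (hardK m B n) 2 H)
    (htwo : ∀ i, 2 ≤ n i) (hsum : ∑ i, n i = m * B) :
    ∃ f : Fin (3 * m) → Fin m, ∀ t, #{i | f i = t} + B = 3 + ∑ i with f i = t, n i := by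
  have exists_source (i : Fin (3 * m)) : ∃ t, ReflTransGen (Adj H) (.s t) (.wt i) := by
    have hi : i ∈ reachedBlocks H Finset.univ := hH.reachedBlocks_univ htwo hsum ▸ Finset.mem_univ i
    simpa [mem_reachedBlocks] using hi
  choose f hf using exists_source
  have reachedBlocks_singleton (t : Fin m) : reachedBlocks H {t} = ({i | f i = t} : Finset _) := by
    ext i
    rw [mem_reachedBlocks, Finset.mem_filter_univ]
    constructor
    · rintro ⟨u, hu, hui⟩
      rw [← Finset.mem_singleton.1 hu]
      exact hH.eq_of_reflTransGen_s htwo hsum (hf i) hui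
    · rintro rfl
      exact ⟨f i, Finset.mem_singleton_self _, hf i⟩
  have fiber_le (t : Fin m) : #{i | f i = t} + B ≤ 3 + ∑ i with f i = t, n i := by
    have := hH.card_reachedBlocks_add_le (T := {t}) (fun i => two_pos.trans_le (htwo i))
      fun u v hv a hva hua => by
        rw [← Finset.mem_singleton.1 hv, Finset.mem_singleton]
        exact hH.eq_of_reflTransGen_s htwo hsum hua hva
    simpa [reachedBlocks_singleton] using this
  have sum_fiber_eq : ∑ t, (#{i | f i = t} + B) = ∑ t, (3 + ∑ i with f i = t, n i) := by
    rw [Finset.sum_add_distrib, Finset.sum_add_distrib, Finset.sum_fiberwise, hsum,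
      ← Finset.card_eq_sum_card_fiberwise fun i _ => Finset.mem_coe.2 (Finset.mem_univ _)]
    simp [mul_comm]
  exact ⟨f, fun t =>
    (Finset.sum_eq_sum_iff_of_le fun t _ => fiber_le t).1 sum_fiber_eq t (Finset.mem_univ t)⟩

end RSPPSolution

section Bounds

variable {m B : ℕ} {n : Fin (3 * m) → ℕ}

theorem two_le_of_injective (hdist : Function.Injective n)
    (hbound : ∀ i, B < 4 * n i ∧ 2 * n i < B) (i : Fin (3 * m)) : 2 ≤ n i := by
  have hm : 0 < m := by have := i.2; omega
  by_contra! hi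
  have hB : B = 3 := by have := hbound i; omega
  have eq_one (j : Fin (3 * m)) : n j = 1 := by have := hbound j; omega
  have : (⟨0, by omega⟩ : Fin (3 * m)) = ⟨1, by omega⟩ := hdist ((eq_one _).trans (eq_one _).symm)
  simp at this

theorem threePartition_of_rsppSolution (hdist : Function.Injective n)
    (hsum : ∑ i, n i = m * B) (hbound : ∀ i, B < 4 * n i ∧ 2 * n i < B)
    {H : Finset (Vtx m × Vtx m)} (hH : RSPPSolution (hardD m B n) (hardK m B n) 2 H) :
    ThreePartition m B n := by
  have htwo := two_le_of_injective hdist hbound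
  obtain ⟨f, hf⟩ := hH.exists_sum_fiber_eq htwo hsum
  refine ⟨f, fun t => ?_⟩
  have sum_eq : ∑ i with f i = t, n i = ∑ i with f i = t, (n i - 1) + #{i | f i = t} := by
    rw [Finset.card_eq_sum_ones, ← Finset.sum_add_distrib]
    exact Finset.sum_congr rfl fun i _ => by have := htwo i; omega
  have hB : 4 < B := by
    have := (hbound ⟨0, by have := t.2; omega⟩).2
    have := htwo ⟨0, by have := t.2; omega⟩
    omega
  have card_eq : #{i | f i = t} = 3 := by
    refine card_eq_three_of_sum_eq (a := fun i => n i - 1) (C := B - 3) (fun i _ j _ hij => ?_)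
      (by omega) (fun i _ => ?_) (by have := hf t; omega)
    · have := htwo i
      have := htwo j
      exact hdist (by grind)
    · have := hbound i
      have := htwo i
      omega
  exact ⟨card_eq, by have := hf t; omega⟩

end Bounds

/-- For pairwise distinct positive integers `n_1, …, n_{3m}`
with `∑ n_i = m·B` and `B/4 < n_i < B/2`, the 3-Partition instance is solvable
iff the constructed MD-RSPP instance `(D,K,2)` is a YES-instance. -/
theorem threePartition_iff_mdrspp (m B : ℕ) (n : Fin (3 * m) → ℕ)
    (hdist : Function.Injective n) (hpos : ∀ i, 0 < n i)
    (hsum : ∑ i, n i = m * B)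
    (hbound : ∀ i, B < 4 * n i ∧ 2 * n i < B) :
    ThreePartition m B n ↔
      ∃ H : Finset (Vtx m × Vtx m), RSPPSolution (hardD m B n) (hardK m B n) 2 H := by
  constructor
  · exact exists_rsppSolution_of_threePartition hpos
  · rintro ⟨H, hH⟩
    exact threePartition_of_rsppSolution hdist hsum hbound hH
end
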